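/- arXiv:2203.06625 — 10 statements merged into one kernel-verified Lean document; each statement's English description precedes it below -/
import Mathlib

section
/- Let q be a prime power and 1 < k < n−1. If X ⊂ V is a (k−1)-dimensional subspace such that S^c(X) is a maximal clique of Γ(n,k)_q, then there is no (k+1)-dimensional subspace Y ⊂ V such that S^c(X) = T^c(Y). -/
/-!
Common definitions: `V = F^n`, coordinate hyperplanes, Grassmannians `G_k(V)`,
non-degenerate linear `[n,k]_q` codes `C(n,k)_q`, adjacency, stars, tops,
and (maximal) cliques of the graph `Γ(n,k)_q` of non-degenerate codes.
-/

/-- The `i`-th coordinate hyperplane `C_i ⊂ F^n`: the kernel of the `i`-th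
coordinate functional. -/
def coordHyp (F : Type*) [Field F] (n : ℕ) (i : Fin n) : Submodule F (Fin n → F) :=
  LinearMap.ker (LinearMap.proj i : (Fin n → F) →ₗ[F] F)

/-- The Grassmannian `G_k(V)`: the set of `k`-dimensional subspaces of `F^n`. -/
def grass (F : Type*) [Field F] (n k : ℕ) : Set (Submodule F (Fin n → F)) :=
  {X | Module.finrank F ↥X = k}

/-- `C(n,k)_q`: the set of non-degenerate linear `[n,k]` codes, i.e. `k`-dimensional
subspaces of `F^n` not contained in any coordinate hyperplane. -/
def ndCodes (F : Type*) [Field F] (n k : ℕ) : Set (Submodule F (Fin n → F)) :=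
  {X | Module.finrank F ↥X = k ∧ ∀ i : Fin n, ¬ X ≤ coordHyp F n i}

/-- Adjacency of `k`-dimensional subspaces: the intersection is `(k-1)`-dimensional. -/
def adjSub (F : Type*) [Field F] (n k : ℕ) (X Y : Submodule F (Fin n → F)) : Prop :=
  Module.finrank F ↥(X ⊓ Y) = k - 1

/-- The star `S(X) ⊂ G_k(V)` of a `(k-1)`-dimensional subspace `X`: all `k`-dimensional
subspaces containing `X`. -/
def starOf (F : Type*) [Field F] (n k : ℕ) (X : Submodule F (Fin n → F)) :
    Set (Submodule F (Fin n → F)) :=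
  {Y | Module.finrank F ↥Y = k ∧ X ≤ Y}

/-- The top `T(Y) ⊂ G_k(V)` of a `(k+1)`-dimensional subspace `Y`: all `k`-dimensional
subspaces of `Y`. -/
def topOf (F : Type*) [Field F] (n k : ℕ) (Y : Submodule F (Fin n → F)) :
    Set (Submodule F (Fin n → F)) :=
  {Z | Module.finrank F ↥Z = k ∧ Z ≤ Y}

/-- `S^c(X) = S(X) ∩ C(n,k)_q`. -/
def scOf (F : Type*) [Field F] (n k : ℕ) (X : Submodule F (Fin n → F)) :
    Set (Submodule F (Fin n → F)) :=
  starOf F n k X ∩ ndCodes F n k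

/-- `T^c(Y) = T(Y) ∩ C(n,k)_q`. -/
def tcOf (F : Type*) [Field F] (n k : ℕ) (Y : Submodule F (Fin n → F)) :
    Set (Submodule F (Fin n → F)) :=
  topOf F n k Y ∩ ndCodes F n k

/-- `c(X)`: the number of coordinate hyperplanes containing the subspace `X`. -/
noncomputable def numHyp (F : Type*) [Field F] (n : ℕ) (X : Submodule F (Fin n → F)) : ℕ :=
  Set.ncard {i : Fin n | X ≤ coordHyp F n i}

/-- A clique of the graph `Γ(n,k)_q`: a set of non-degenerate `[n,k]` codes that are
pairwise adjacent. -/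
def isClique (F : Type*) [Field F] (n k : ℕ) (S : Set (Submodule F (Fin n → F))) : Prop :=
  S ⊆ ndCodes F n k ∧ S.Pairwise (adjSub F n k)

/-- A maximal clique of `Γ(n,k)_q`: a clique not properly contained in another clique. -/
def isMaxClique (F : Type*) [Field F] (n k : ℕ) (S : Set (Submodule F (Fin n → F))) : Prop :=
  isClique F n k S ∧ ∀ T, isClique F n k T → S ⊆ T → T = S

/-- `[m]_q = q^{m-1} + ⋯ + q + 1 = (q^m - 1)/(q - 1)`. -/
def gaussNum (q m : ℕ) : ℕ := ∑ i ∈ Finset.range m, q ^ i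

/-- If `S^c(X)` is a maximal clique of `Γ(n,k)_q` for a `(k-1)`-dimensional
subspace `X`, then there is no `(k+1)`-dimensional subspace `Y` with `S^c(X) = T^c(Y)`. -/
theorem stmt_4 (q n k : ℕ) (F : Type*) [Field F] [Fintype F]
    (hF : Fintype.card F = q) (hk : 1 < k) (hkn : k < n - 1)
    (X : Submodule F (Fin n → F)) (hX : Module.finrank F ↥X = k - 1)
    (hmax : isMaxClique F n k (scOf F n k X)) :
    ¬ ∃ Y : Submodule F (Fin n → F),
        Module.finrank F ↥Y = k + 1 ∧ scOf F n k X = tcOf F n k Y := by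
  rintro ⟨Y, hY, hA⟩
  have hstar : ∀ v : Fin n → F, v ∉ X →
      (∀ i, X ≤ coordHyp F n i → v i ≠ 0) → X ⊔ Submodule.span F {v} ∈ scOf F n k X := by
    intro v hv hI
    have hr : Module.finrank F ↥(X ⊔ Submodule.span F {v}) = k := by
      have h0 : v ≠ 0 := by
        rintro rfl
        exact hv X.zero_mem
      have h1 := Submodule.finrank_sup_add_finrank_inf_eq X (Submodule.span F {v})
      have h2 : X ⊓ Submodule.span F {v} = ⊥ :=
        disjoint_iff.mp ((Submodule.disjoint_span_singleton' h0).mpr hv)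
      rw [h2, finrank_bot, finrank_span_singleton h0, hX] at h1
      omega
    refine ⟨⟨hr, le_sup_left⟩, hr, ?_⟩
    intro i hi
    refine hI i (le_sup_left.trans hi) ?_
    have : v ∈ coordHyp F n i :=
      hi (le_sup_right (a := X) (Submodule.mem_span_singleton_self v))
    simpa [coordHyp] using this
  obtain ⟨Z, hZ⟩ : ∃ Z, Z ∈ scOf F n k X := by
    by_cases h1 : (1 : Fin n → F) ∈ X
    · have hne : X ≠ ⊤ := by
        rintro rfl
        rw [finrank_top, Module.finrank_fin_fun] at hX
        omega
      obtain ⟨v, -, hv⟩ := SetLike.exists_of_lt (lt_top_iff_ne_top.mpr hne)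
      refine ⟨_, hstar v hv ?_⟩
      intro i hi
      have := hi h1
      simp [coordHyp] at this
    · exact ⟨_, hstar 1 h1 (fun i _ => by simp)⟩
  have hZY : Z ≤ Y := by
    rw [hA] at hZ
    exact hZ.1.2
  have hXY : X ≤ Y := hZ.1.2.trans hZY
  have hYnd : ∀ i, ¬ Y ≤ coordHyp F n i := fun i hi => hZ.2.2 i (hZY.trans hi)
  have hW : ∀ v : Fin n → F, (∀ i, X ≤ coordHyp F n i → v i ≠ 0) → v ∈ Y := by
    intro v hI
    by_cases hv : v ∈ X
    · exact hXY hv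
    · have h := hstar v hv hI
      rw [hA] at h
      exact h.1.2 (le_sup_right (a := X) (Submodule.mem_span_singleton_self v))
  -- functionals not vanishing on `X` are multiples of coordinates on `Y`
  have hfun : ∀ f : (Fin n → F) →ₗ[F] F, (∃ x ∈ X, f x ≠ 0) →
      ∃ i, ∃ c : F, ∀ y ∈ Y, f y = c * y i := by
    rintro f ⟨x, hx, hfx⟩
    have hr : Module.finrank F ↥(LinearMap.ker f ⊓ Y) = k := by
      have h1 := LinearMap.finrank_range_add_finrank_ker (f.domRestrict Y)
      have h2 : LinearMap.range (f.domRestrict Y) = ⊤ := by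
        rw [LinearMap.range_eq_top]
        apply LinearMap.surjective
        intro h
        exact hfx (by simpa using LinearMap.congr_fun h ⟨x, hXY hx⟩)
      have h3 : Module.finrank F ↥(LinearMap.ker f ⊓ Y)
          = Module.finrank F ↥(LinearMap.ker (f.domRestrict Y)) := by
        have h4 : LinearMap.ker f ⊓ Y
            = (LinearMap.ker (f.domRestrict Y)).map Y.subtype := by
          ext z
          simp [and_comm]
        rw [h4]
        exact Submodule.finrank_map_subtype_eq _ _
      rw [h2, finrank_top, Module.finrank_self, hY] at h1
      omega
    have hnot : LinearMap.ker f ⊓ Y ∉ tcOf F n k Y := by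
      rw [← hA]
      intro h
      exact hfx (h.1.2 hx).1
    have : ∃ i, LinearMap.ker f ⊓ Y ≤ coordHyp F n i := by
      by_contra! hcon
      exact hnot ⟨⟨hr, inf_le_right⟩, hr, hcon⟩
    obtain ⟨i, hi⟩ := this
    have key : ∀ y ∈ Y, y i = f y / f x * x i := by
      intro y hy
      have : y - (f y / f x) • x ∈ coordHyp F n i := by
        apply hi
        refine ⟨?_, Y.sub_mem hy (Y.smul_mem _ (hXY hx))⟩
        simp [hfx]
      simpa [coordHyp, sub_eq_zero] using this
    have hxi : x i ≠ 0 := by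
      intro h
      apply hYnd i
      intro y hy
      have := key y hy
      rw [h, mul_zero] at this
      simpa [coordHyp] using this
    refine ⟨i, f x / x i, fun y hy => ?_⟩
    rw [key y hy]
    field_simp
  -- a coordinate nonvanishing on `X`
  have hXbot : X ≠ ⊥ := by
    rintro rfl
    rw [finrank_bot] at hX
    omega
  obtain ⟨x, hx, hx0⟩ := Submodule.exists_mem_ne_zero_of_ne_bot hXbot
  obtain ⟨i0, hi0⟩ : ∃ i, x i ≠ 0 := Function.ne_iff.mp hx0
  have hd : (Pi.single i0 1 : Fin n → F) ∈ Y := by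
    have h1 : (1 : Fin n → F) ∈ Y := hW 1 (fun i _ => by simp)
    have h2 : (1 + Pi.single i0 1 : Fin n → F) ∈ Y := by
      apply hW
      intro i hi
      have hne : i ≠ i0 := by
        rintro rfl
        exact hi0 (by simpa [coordHyp] using hi hx)
      simp [hne]
    simpa using Y.sub_mem h2 h1
  have hg : ∀ g : (Fin n → F) →ₗ[F] F, (∀ z ∈ X, g z = 0) → (∃ y ∈ Y, g y ≠ 0) →
      g (Pi.single i0 1) = -1 := by
    rintro g hgX ⟨y, hy, hgy⟩
    obtain ⟨j, c, hc⟩ := hfun (LinearMap.proj i0 + g) ⟨x, hx, by simpa [hgX x hx] using hi0⟩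
    have hj : i0 ≠ j := by
      rintro rfl
      have h1 := hc x (hXY hx)
      have h2 := hc y hy
      simp only [LinearMap.add_apply, LinearMap.proj_apply, hgX x hx, add_zero] at h1 h2
      have hc1 : c = 1 := by
        apply mul_right_cancel₀ hi0
        rw [one_mul, ← h1]
      rw [hc1, one_mul] at h2
      exact hgy (by simpa using h2)
    have h := hc _ hd
    simp only [LinearMap.add_apply, LinearMap.proj_apply, Pi.single_eq_same,
      Pi.single_eq_of_ne hj.symm, mul_zero] at h
    exact eq_neg_of_add_eq_zero_right h
  have hex : ∀ U : Submodule F (Fin n → F), Module.finrank F ↥U ≤ k → ∃ y ∈ Y, y ∉ U := by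
    intro U hU
    by_contra! hcon
    have := Submodule.finrank_mono (show Y ≤ U from hcon)
    omega
  obtain ⟨y1, hy1, hy1X⟩ := hex X (by omega)
  obtain ⟨f1, hf1, hf1X⟩ := Submodule.exists_le_ker_of_notMem hy1X
  have hX' : Module.finrank F ↥(X ⊔ Submodule.span F {y1}) ≤ k := by
    have h1 := Submodule.finrank_add_le_finrank_add_finrank X (Submodule.span F {y1})
    have h2 : Module.finrank F ↥(Submodule.span F {y1}) ≤ 1 := by
      simpa using finrank_span_le_card (R := F) ({y1} : Set (Fin n → F))
    omega
  obtain ⟨y2, hy2, hy2X⟩ := hex _ hX'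
  obtain ⟨f2, hf2, hf2X⟩ := Submodule.exists_le_ker_of_notMem hy2X
  have hf1z : ∀ z ∈ X, f1 z = 0 := fun z hz => hf1X hz
  have hf2z : ∀ z ∈ X, f2 z = 0 := fun z hz => hf2X (le_sup_left (b := Submodule.span F {y1}) hz)
  have hf2y1 : f2 y1 = 0 :=
    hf2X (le_sup_right (a := X) (Submodule.mem_span_singleton_self y1))
  have e1 := hg f1 hf1z ⟨y1, hy1, hf1⟩
  have e2 := hg f2 hf2z ⟨y2, hy2, hf2⟩
  have e3 := hg (f1 + f2) (fun z hz => by simp [hf1z z hz, hf2z z hz])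
    ⟨y1, hy1, by simpa [hf2y1] using hf1⟩
  rw [LinearMap.add_apply, e1, e2] at e3
  simp at e3
end

section
/- Let q be a prime power, 1 < k < n−1, and let X ⊂ V be a (k−1)-dimensional subspace with c(X) ≥ 1. Then the set S^c(X) has exactly (q−1)^{c(X)−1} · q^{n−k−c(X)+1} elements. -/
theorem aux_finrank_sup {F : Type*} [Field F] {n : ℕ} (X : Submodule F (Fin n → F))
    (v : Fin n → F) (hv : v ∉ X) :
    Module.finrank F ↥(X ⊔ Submodule.span F {v}) = Module.finrank F X + 1 := by
  have h0 : v ≠ 0 := fun h => hv (h ▸ X.zero_mem)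
  have h := Submodule.finrank_sup_add_finrank_inf_eq X (Submodule.span F {v})
  have hd : X ⊓ Submodule.span F {v} = ⊥ :=
    disjoint_iff.mp ((Submodule.disjoint_span_singleton' h0).mpr hv)
  rw [hd, finrank_bot, finrank_span_singleton h0] at h
  simpa using h

/-- For `1 < k < n-1` and a `(k-1)`-dimensional subspace `X ⊂ V` with
`c(X) ≥ 1`, the set `S^c(X)` has exactly `(q-1)^{c(X)-1} · q^{n-k-c(X)+1}` elements.
(The exponent `n-k-c(X)+1` is written as `n-k+1-c(X)` to be meaningful in `ℕ`.) -/
theorem stmt_5 (q n k : ℕ) (F : Type*) [Field F] [Fintype F]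
    (hF : Fintype.card F = q) (hk : 1 < k) (hkn : k < n - 1)
    (X : Submodule F (Fin n → F)) (hX : Module.finrank F ↥X = k - 1)
    (hc : 1 ≤ numHyp F n X) :
    (scOf F n k X).ncard =
      (q - 1) ^ (numHyp F n X - 1) * q ^ (n - k + 1 - numHyp F n X) := by
  classical
  have hFq : 2 ≤ q := by
    rw [← hF]; exact Fintype.one_lt_card
  set c := numHyp F n X with hcdef
  set I : Finset (Fin n) := Finset.univ.filter (fun i => X ≤ coordHyp F n i) with hI
  have hcI : I.card = c := by
    rw [hcdef, numHyp, ← Set.ncard_coe_finset]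
    congr 1
    ext i; simp [hI]
  have hmem : ∀ (i : Fin n) (v : Fin n → F), v ∈ coordHyp F n i ↔ v i = 0 := by
    intro i v; simp [coordHyp]
  have hmemI : ∀ i, i ∈ I ↔ X ≤ coordHyp F n i := by intro i; simp [hI]
  obtain ⟨i0, hi0⟩ : I.Nonempty := by
    rw [← Finset.card_pos]; omega
  have hcn : c ≤ n := by
    rw [← hcI]; simpa using Finset.card_le_univ I
  -- vectors nonzero on I
  set A : Finset (Fin n → F) :=
    Fintype.piFinset (fun i => if i ∈ I then Finset.univ.erase (0 : F) else Finset.univ) with hA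
  have hmemA : ∀ v, v ∈ A ↔ ∀ i ∈ I, v i ≠ 0 := by
    intro v
    rw [hA, Fintype.mem_piFinset]
    refine forall_congr' fun i => ?_
    by_cases h : i ∈ I <;> simp [h]
  have hcardA : A.card = (q - 1) ^ c * q ^ (n - c) := by
    rw [hA, Fintype.card_piFinset]
    have : ∀ i : Fin n, (if i ∈ I then Finset.univ.erase (0 : F) else Finset.univ).card
        = if i ∈ I then q - 1 else q := by
      intro i
      by_cases h : i ∈ I <;> simp [h, hF]
    rw [Finset.prod_congr rfl (fun i _ => this i), Finset.prod_ite]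
    simp only [Finset.prod_const]
    congr 2
    · rw [← hcI]; congr 1; ext i; simp
    · rw [← hcI]
      have h2 := Finset.card_compl I
      rw [Fintype.card_fin] at h2
      rw [← h2]; congr 1; ext i; simp
  -- vectors vanishing on I
  set B : Finset (Fin n → F) :=
    Fintype.piFinset (fun i => if i ∈ I then {(0 : F)} else Finset.univ) with hB
  have hcardB : B.card = q ^ (n - c) := by
    rw [hB, Fintype.card_piFinset]
    have : ∀ i : Fin n, (if i ∈ I then {(0 : F)} else Finset.univ).card
        = if i ∈ I then 1 else q := by
      intro i
      by_cases h : i ∈ I <;> simp [h, hF]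
    rw [Finset.prod_congr rfl (fun i _ => this i), Finset.prod_ite]
    simp only [Finset.prod_const, one_pow, one_mul]
    congr 1
    rw [← hcI]
    have h2 := Finset.card_compl I
    rw [Fintype.card_fin] at h2
    rw [← h2]; congr 1; ext i; simp
  have hcardS : ∀ Y : Submodule F (Fin n → F),
      (Finset.univ.filter (fun v => v ∈ Y)).card = q ^ Module.finrank F Y := by
    intro Y
    rw [← hF, ← Module.card_eq_pow_finrank (K := F) (V := Y), Fintype.card_subtype]
  have hle : k - 1 ≤ n - c := by
    have h1 : (Finset.univ.filter (fun v => v ∈ X)).card ≤ B.card := by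
      apply Finset.card_le_card
      intro v hv
      have hv' : v ∈ X := by simpa using hv
      rw [hB, Fintype.mem_piFinset]
      intro i
      by_cases h : i ∈ I
      · simpa [h] using (hmem i v).mp ((hmemI i).mp h hv')
      · simp [h]
    rw [hcardS, hX, hcardB] at h1
    exact (Nat.pow_le_pow_iff_right hFq).mp h1
  have hfin : (scOf F n k X).Finite := Set.toFinite _
  set S := hfin.toFinset with hS
  have hmemS : ∀ Y, Y ∈ S ↔ Y ∈ scOf F n k X := by intro Y; simp [hS]
  rw [Set.ncard_eq_toFinset_card _ hfin]
  have hAX : ∀ v ∈ A, v ∉ X := fun v hv hvX =>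
    (hmemA v).mp hv i0 hi0 ((hmem i0 v).mp ((hmemI i0).mp hi0 hvX))
  have hvs : ∀ v : Fin n → F, v ∈ X ⊔ Submodule.span F {v} := fun v =>
    Submodule.mem_sup_right (Submodule.mem_span_singleton_self v)
  have hmaps : ∀ v ∈ A, X ⊔ Submodule.span F {v} ∈ S := by
    intro v hv
    rw [hmemS]
    have hr : Module.finrank F ↥(X ⊔ Submodule.span F {v}) = k := by
      rw [aux_finrank_sup X v (hAX v hv), hX]; omega
    refine ⟨⟨hr, le_sup_left⟩, hr, ?_⟩
    intro i hi
    have hiI : i ∈ I := (hmemI i).mpr (le_sup_left.trans hi)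
    exact (hmemA v).mp hv i hiI ((hmem i v).mp (hi (hvs v)))
  have hfib : ∀ Y ∈ S, (A.filter (fun v => X ⊔ Submodule.span F {v} = Y)).card
      = q ^ k - q ^ (k - 1) := by
    intro Y hY
    obtain ⟨⟨hYk, hXY⟩, -, hYn⟩ := (hmemS Y).mp hY
    have : A.filter (fun v => X ⊔ Submodule.span F {v} = Y) =
        Finset.univ.filter (fun v => v ∈ Y) \ Finset.univ.filter (fun v => v ∈ X) := by
      ext v
      simp only [Finset.mem_filter, Finset.mem_sdiff, Finset.mem_univ, true_and]
      constructor
      · rintro ⟨h1, rfl⟩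
        exact ⟨hvs v, hAX v h1⟩
      · rintro ⟨h1, h2⟩
        have he : X ⊔ Submodule.span F {v} = Y := by
          apply Submodule.eq_of_le_of_finrank_le
          · exact sup_le hXY ((Submodule.span_singleton_le_iff_mem v Y).mpr h1)
          · rw [aux_finrank_sup X v h2, hX, hYk]; omega
        refine ⟨(hmemA v).mpr ?_, he⟩
        intro i hi h0
        apply hYn i
        rw [← he]
        exact sup_le ((hmemI i).mp hi)
          ((Submodule.span_singleton_le_iff_mem v _).mpr ((hmem i v).mpr h0))
    rw [this, Finset.card_sdiff_of_subset, hcardS, hcardS, hYk, hX]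
    intro v hv
    have hv' : v ∈ X := by simpa using hv
    simpa using hXY hv'
  have hcount := Finset.card_eq_sum_card_fiberwise hmaps
  rw [Finset.sum_congr rfl hfib, hcardA, Finset.sum_const, smul_eq_mul] at hcount
  obtain ⟨p, rfl⟩ : ∃ p, q = p + 1 := ⟨q - 1, by omega⟩
  obtain ⟨d, hd⟩ : ∃ d, c = d + 1 := ⟨c - 1, by omega⟩
  obtain ⟨m, rfl⟩ : ∃ m, k = m + 1 := ⟨k - 1, by omega⟩
  have e1 : n - c = (n - (m + 1) + 1 - c) + m := by omega
  have e2 : (p + 1) ^ (m + 1) - (p + 1) ^ (m + 1 - 1) = p * (p + 1) ^ m := by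
    rw [Nat.add_sub_cancel, pow_succ]
    apply Nat.sub_eq_of_eq_add
    ring
  rw [e1, e2, pow_add] at hcount
  have hpos : 0 < p * (p + 1) ^ m := Nat.mul_pos (by omega) (by positivity)
  apply Nat.eq_of_mul_eq_mul_right hpos
  rw [← hcount, hd]
  simp only [Nat.add_sub_cancel]
  ring
end

section
/- Let q be a prime power, 1 < k < n−1, and Y ∈ C(n,k+1)_q. Then for every i ∈ {1,…,n} the subspace Y ∩ C_i is k-dimensional; moreover, if n(Y) denotes the number of distinct subspaces in the collection Y ∩ C_1, …, Y ∩ C_n, then k+1 ≤ n(Y) ≤ n and the set T^c(Y) has exactly [k+1]_q − n(Y) elements. -/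
/-- The number of hyperplanes of a finite-dimensional space over a finite field. -/
theorem ncard_hyperplanes {F W : Type*} [Field F] [Fintype F] [AddCommGroup W] [Module F W]
    [FiniteDimensional F W] (k : ℕ) (h : Module.finrank F W = k + 1) :
    {H : Submodule F W | Module.finrank F H = k}.ncard = gaussNum (Fintype.card F) (k + 1) := by
  have e1 : {H : Submodule F W // Module.finrank F H = k} ≃
      {H : Submodule F (Module.Dual F W) // Module.finrank F H = 1} :=
    (Subspace.orderIsoFiniteDimensional.toEquiv.trans OrderDual.ofDual).subtypeEquiv (by
      intro H
      have h1 := Subspace.finrank_add_finrank_dualAnnihilator_eq H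
      change _ ↔ Module.finrank F H.dualAnnihilator = 1
      omega)
  have e2 := e1.trans (Projectivization.equivSubmodule F (Module.Dual F W)).symm
  rw [← Nat.card_coe_set_eq]
  refine (Nat.card_congr e2).trans ?_
  rw [Projectivization.card_of_finrank F (Module.Dual F W) (n := k + 1)
    (by rw [Subspace.dual_finrank_eq, h]), Nat.card_eq_fintype_card, gaussNum]

theorem ncard_topOf {F : Type*} [Field F] [Fintype F] (n k : ℕ) (Y : Submodule F (Fin n → F))
    (h : Module.finrank F Y = k + 1) :
    (topOf F n k Y).ncard = gaussNum (Fintype.card F) (k + 1) := by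
  rw [← ncard_hyperplanes (W := Y) k h,
    ← Set.ncard_image_of_injective _ (Submodule.map_injective_of_injective Y.subtype_injective)]
  congr 1
  ext Z
  constructor
  · rintro ⟨hZ, hZY⟩
    have hm : Submodule.map Y.subtype (Submodule.comap Y.subtype Z) = Z := by
      rw [Submodule.map_comap_subtype, inf_of_le_right hZY]
    refine ⟨Submodule.comap Y.subtype Z, ?_, hm⟩
    change Module.finrank F _ = k
    rw [← Submodule.finrank_map_subtype_eq, hm, hZ]
  · rintro ⟨H, hH, rfl⟩
    exact ⟨(Submodule.finrank_map_subtype_eq _ _).trans hH, Submodule.map_subtype_le _ _⟩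

theorem finrank_inf_coordHyp {F : Type*} [Field F] (n : ℕ) (W : Submodule F (Fin n → F))
    (i : Fin n) :
    Module.finrank F W ≤ Module.finrank F ↥(W ⊓ coordHyp F n i) + 1 ∧
    (¬ W ≤ coordHyp F n i → Module.finrank F W = Module.finrank F ↥(W ⊓ coordHyp F n i) + 1) := by
  set f : W →ₗ[F] F := (LinearMap.proj i : (Fin n → F) →ₗ[F] F) ∘ₗ W.subtype with hf
  have hker : LinearMap.ker f = Submodule.comap W.subtype (coordHyp F n i) := by
    rw [hf, LinearMap.ker_comp]; rfl
  have h1 := LinearMap.finrank_range_add_finrank_ker f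
  rw [hker, ← Submodule.finrank_map_subtype_eq, Submodule.map_comap_subtype] at h1
  have h2 : Module.finrank F (LinearMap.range f) ≤ 1 := by
    simpa using Submodule.finrank_le (LinearMap.range f)
  refine ⟨by omega, fun hW => ?_⟩
  have h3 : Module.finrank F (LinearMap.range f) ≠ 0 := by
    intro h0
    apply hW
    rw [Submodule.finrank_eq_zero, LinearMap.range_eq_bot] at h0
    intro x hx
    exact LinearMap.congr_fun h0 ⟨x, hx⟩
  omega

theorem finrank_le_inf_add_card {F : Type*} [Field F] (n : ℕ) (Y : Submodule F (Fin n → F))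
    (s : Finset (Submodule F (Fin n → F)))
    (hs : (s : Set _) ⊆ Set.range fun i : Fin n => Y ⊓ coordHyp F n i) :
    Module.finrank F Y ≤ Module.finrank F ↥(Y ⊓ s.inf id) + s.card := by
  classical
  induction s using Finset.induction_on with
  | empty => rw [Finset.inf_empty, inf_top_eq]; omega
  | insert a s ha ih =>
    rw [Finset.coe_insert, Set.insert_subset_iff] at hs
    obtain ⟨⟨i, hi⟩, hs⟩ := hs
    have ih := ih hs
    have h1 := (finrank_inf_coordHyp n (Y ⊓ s.inf id) i).1
    have h2 : Y ⊓ (insert a s).inf id = Y ⊓ s.inf id ⊓ coordHyp F n i := by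
      rw [Finset.inf_insert, ← hi]
      ext x
      simp only [id, Submodule.mem_inf]
      tauto
    rw [h2, Finset.card_insert_of_notMem ha]
    omega

/-- For `Y ∈ C(n,k+1)_q` each `Y ∩ C_i` is `k`-dimensional, the number
`n(Y)` of distinct subspaces among `Y ∩ C_1, …, Y ∩ C_n` satisfies `k+1 ≤ n(Y) ≤ n`,
and `T^c(Y)` has exactly `[k+1]_q - n(Y)` elements. -/
theorem stmt_6 (q n k : ℕ) (F : Type*) [Field F] [Fintype F]
    (hF : Fintype.card F = q) (hk : 1 < k) (hkn : k < n - 1)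
    (Y : Submodule F (Fin n → F)) (hY : Y ∈ ndCodes F n (k + 1)) :
    (∀ i : Fin n, Module.finrank F ↥(Y ⊓ coordHyp F n i) = k) ∧
    k + 1 ≤ (Set.range fun i : Fin n => Y ⊓ coordHyp F n i).ncard ∧
    (Set.range fun i : Fin n => Y ⊓ coordHyp F n i).ncard ≤ n ∧
    (tcOf F n k Y).ncard =
      gaussNum q (k + 1) - (Set.range fun i : Fin n => Y ⊓ coordHyp F n i).ncard := by
  classical
  obtain ⟨hr, hnd⟩ := hY
  have hdim : ∀ i : Fin n, Module.finrank F ↥(Y ⊓ coordHyp F n i) = k := fun i => by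
    have := (finrank_inf_coordHyp n Y i).2 (hnd i)
    omega
  have hfin := Set.finite_range fun i : Fin n => Y ⊓ coordHyp F n i
  refine ⟨hdim, ?_, ?_, ?_⟩
  · have h1 := finrank_le_inf_add_card n Y hfin.toFinset (by simp)
    have h2 : Y ⊓ hfin.toFinset.inf id = ⊥ := by
      rw [eq_bot_iff]
      intro x hx
      rw [Submodule.mem_bot]
      funext i
      have h3 : hfin.toFinset.inf id ≤ Y ⊓ coordHyp F n i :=
        Finset.inf_le (f := id) (by simp)
      exact (h3 hx.2).2
    rw [h2, finrank_bot, hr, ← Set.ncard_eq_toFinset_card _ hfin] at h1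
    omega
  · rw [← Set.image_univ]
    refine (Set.ncard_image_le Set.finite_univ).trans ?_
    simp [Set.ncard_univ]
  · have hsub : (Set.range fun i : Fin n => Y ⊓ coordHyp F n i) ⊆ topOf F n k Y := by
      rintro _ ⟨i, rfl⟩
      exact ⟨hdim i, inf_le_left⟩
    have heq : tcOf F n k Y = topOf F n k Y \ Set.range fun i : Fin n => Y ⊓ coordHyp F n i := by
      ext Z
      constructor
      · rintro ⟨hZ, _, hZ2⟩
        refine ⟨hZ, ?_⟩
        rintro ⟨i, rfl⟩
        exact hZ2 i inf_le_right
      · rintro ⟨hZ, hZ2⟩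
        refine ⟨hZ, hZ.1, fun i hi => hZ2 ⟨i, ?_⟩⟩
        exact (Submodule.eq_of_le_of_finrank_eq (le_inf hZ.2 hi) (by rw [hdim i, hZ.1])).symm
    rw [heq, Set.ncard_sdiff hsub hfin, ncard_topOf n k Y hr, hF]
end

section
/- Let q be a prime power and 1 < k < n−1. The following two conditions are equivalent: (a) for every Y ∈ C(n,k+1)_q, the set T^c(Y) is a maximal clique of Γ(n,k)_q; (b) [k+1]_q − (q+1) > n. -/
theorem aux_smul {F E : Type*} [Field F] [AddCommGroup E] [Module F E]
    (f g : E →ₗ[F] F) (h : LinearMap.ker f ≤ LinearMap.ker g) : ∃ c : F, g = c • f := by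
  have h1 : g ∈ Submodule.span F (Set.range (fun _ : Unit => f)) :=
    mem_span_of_iInf_ker_le_ker (by simpa using h)
  rw [Set.range_const, Submodule.mem_span_singleton] at h1
  obtain ⟨c, hc⟩ := h1
  exact ⟨c, hc.symm⟩

theorem aux_clique {F : Type*} [Field F] {n k : ℕ} {Y : Submodule F (Fin n → F)}
    (hY : Module.finrank F Y = k + 1) : isClique F n k (tcOf F n k Y) := by
  refine ⟨fun Z hZ => hZ.2, ?_⟩
  rintro Z ⟨⟨h1, h2⟩, -⟩ Z' ⟨⟨h1', h2'⟩, -⟩ hne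
  have e := Submodule.finrank_sup_add_finrank_inf_eq Z Z'
  have l := Submodule.finrank_mono (sup_le h2 h2')
  have g : Module.finrank F Z < Module.finrank F ↥(Z ⊔ Z') := by
    apply Submodule.finrank_lt_finrank_of_lt
    refine lt_of_le_of_ne le_sup_left fun he => hne ?_
    have : Z' ≤ Z := by rw [he]; exact le_sup_right
    exact (Submodule.eq_of_le_of_finrank_eq this (by rw [h1, h1'])).symm
  unfold adjSub
  omega

theorem aux_cover {F : Type*} [Field F] {n k : ℕ} {Y : Submodule F (Fin n → F)}
    (hY : Y ∈ ndCodes F n (k + 1)) (f : Module.Dual F Y) (hf : f ≠ 0) :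
    (∃ (i : Fin n) (c : Fˣ), f = c.1 • ((LinearMap.proj i : (Fin n → F) →ₗ[F] F) ∘ₗ Y.subtype)) ∨
      (LinearMap.ker f).map Y.subtype ∈ tcOf F n k Y := by
  by_cases h : ∃ i, (LinearMap.ker f).map Y.subtype ≤ coordHyp F n i
  · left
    obtain ⟨i, hi⟩ := h
    refine ⟨i, ?_⟩
    obtain ⟨c, hc⟩ := aux_smul f ((LinearMap.proj i : (Fin n → F) →ₗ[F] F) ∘ₗ Y.subtype) (by
      intro x hx
      exact hi ⟨x, hx, rfl⟩)
    have hc0 : c ≠ 0 := by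
      rintro rfl
      apply hY.2 i
      intro y hy
      have := LinearMap.congr_fun hc ⟨y, hy⟩
      simpa [coordHyp] using this
    refine ⟨(Units.mk0 c hc0)⁻¹, ?_⟩
    rw [hc, smul_smul]
    simp [hc0]
  · right
    push Not at h
    have hr : Module.finrank F ((LinearMap.ker f).map Y.subtype) = k := by
      rw [Submodule.finrank_map_subtype_eq]
      have := Module.Dual.finrank_ker_add_one_of_ne_zero hf
      have := hY.1
      omega
    exact ⟨⟨hr, Submodule.map_subtype_le _ _⟩, hr, h⟩

theorem aux_count {F : Type*} [Field F] [Fintype F] {n k : ℕ} {Y : Submodule F (Fin n → F)}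
    (hY : Y ∈ ndCodes F n (k + 1)) (A : Submodule F (Module.Dual F Y))
    (hA : Module.finrank F A ≤ 2)
    (h : ∀ f : Module.Dual F Y, (LinearMap.ker f).map Y.subtype ∈ tcOf F n k Y → f ∈ A) :
    gaussNum (Fintype.card F) (k + 1) ≤ n + (Fintype.card F + 1) := by
  classical
  let φ : (Fin n × Fˣ) ⊕ A → Module.Dual F Y := Sum.elim
    (fun p => p.2.1 • ((LinearMap.proj p.1 : (Fin n → F) →ₗ[F] F) ∘ₗ Y.subtype)) (fun a => a.1)
  have hφ : Function.Surjective φ := by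
    intro f
    by_cases hf : f = 0
    · exact ⟨Sum.inr 0, by simp [φ, hf]⟩
    · rcases aux_cover hY f hf with ⟨i, c, hc⟩ | hc
      · exact ⟨Sum.inl (i, c), hc.symm⟩
      · exact ⟨Sum.inr ⟨f, h f hc⟩, rfl⟩
  have : Finite (Module.Dual F Y) := Module.finite_of_finite F
  have hc := Nat.card_le_card_of_surjective φ hφ
  have hA2 : Nat.card A ≤ Fintype.card F ^ 2 := by
    rw [Module.natCard_eq_pow_finrank (K := F), Nat.card_eq_fintype_card]
    exact Nat.pow_le_pow_right Fintype.card_pos hA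
  rw [Nat.card_sum, Nat.card_prod, Module.natCard_eq_pow_finrank (K := F) (V := Module.Dual F Y),
    Subspace.dual_finrank_eq, hY.1, Nat.card_units, Nat.card_eq_fintype_card,
    Nat.card_eq_fintype_card, Fintype.card_fin] at hc
  have hq : 1 < Fintype.card F := Fintype.one_lt_card
  obtain ⟨r, hr⟩ : ∃ r, Fintype.card F = r + 1 := ⟨Fintype.card F - 1, by omega⟩
  have hg : gaussNum (Fintype.card F) (k + 1) * r + 1 = Fintype.card F ^ (k + 1) := by
    rw [hr]
    exact geom_sum_mul_add r (k + 1)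
  simp only [hr, Nat.add_sub_cancel] at *
  have : gaussNum (r + 1) (k + 1) * r ≤ (n + (r + 1 + 1)) * r := by nlinarith
  exact Nat.le_of_mul_le_mul_right this (by omega)

theorem aux_back {F : Type*} [Field F] [Fintype F] {n k : ℕ} (hk : 1 < k)
    (h : n < gaussNum (Fintype.card F) (k + 1) - (Fintype.card F + 1))
    (Y : Submodule F (Fin n → F)) (hY : Y ∈ ndCodes F n (k + 1)) :
    isMaxClique F n k (tcOf F n k Y) := by
  refine ⟨aux_clique hY.1, fun T hT hle => ?_⟩
  refine Set.Subset.antisymm (fun X hX => ?_) hle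
  by_contra hXY
  have hXn := hT.1 hX
  have hXY' : ¬ X ≤ Y := fun hc => hXY ⟨⟨hXn.1, hc⟩, hXn⟩
  have hlt : Module.finrank F ↥(X ⊓ Y) < k := by
    rw [← hXn.1]
    apply Submodule.finrank_lt_finrank_of_lt
    exact lt_of_le_of_ne inf_le_left fun he => hXY' (by rw [← he]; exact inf_le_right)
  have key : ∀ Z ∈ tcOf F n k Y, X ⊓ Y ≤ Z ∧ Module.finrank F ↥(X ⊓ Y) = k - 1 := by
    intro Z hZ
    have hadj : Module.finrank F ↥(X ⊓ Z) = k - 1 :=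
      hT.2 hX (hle hZ) (fun he => hXY (he ▸ hZ))
    have hl : X ⊓ Z ≤ X ⊓ Y := inf_le_inf_left _ hZ.1.2
    have hm := Submodule.finrank_mono hl
    have he : X ⊓ Z = X ⊓ Y := Submodule.eq_of_le_of_finrank_eq hl (by omega)
    exact ⟨he ▸ inf_le_right, by omega⟩
  have hcount : gaussNum (Fintype.card F) (k + 1) ≤ n + (Fintype.card F + 1) := by
    by_cases hne : (tcOf F n k Y).Nonempty
    · obtain ⟨Z, hZ⟩ := hne
      refine aux_count hY ((X ⊓ Y).comap Y.subtype).dualAnnihilator ?_ ?_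
      · have h1 := Subspace.finrank_add_finrank_dualAnnihilator_eq ((X ⊓ Y).comap Y.subtype)
        have h2 : Module.finrank F ((X ⊓ Y).comap Y.subtype) = k - 1 := by
          rw [← (key Z hZ).2]
          exact (Submodule.comapSubtypeEquivOfLe inf_le_right).finrank_eq
        have := hY.1
        omega
      · intro f hf
        rw [Submodule.mem_dualAnnihilator]
        intro w hw
        obtain ⟨w', hw', he⟩ := (key _ hf).1 hw
        have : w' = w := Subtype.ext he
        rw [← this]
        exact hw'
    · refine aux_count hY ⊥ (by simp) fun f hf => (hne ⟨_, hf⟩).elim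
  omega

theorem aux_construct {F : Type*} [Field F] [Fintype F] {n m : ℕ} (hm : 0 < m)
    (hn : Fintype.card F ^ 2 * gaussNum (Fintype.card F) m ≤ n) :
    ∃ Y W : Submodule F (Fin n → F), Module.finrank F Y = m + 2 ∧ Module.finrank F W = m ∧ W ≤ Y ∧
      (∀ i, ¬ W ≤ coordHyp F n i) ∧ ∀ Z ∈ tcOf F n (m + 1) Y, W ≤ Z := by
  classical
  let A := Fin 2 → F
  let B := Fin m → F
  let P := Module.Dual F A × Projectivization F (Module.Dual F B)
  have : Finite (Module.Dual F A) := Module.finite_of_finite F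
  have : Finite (Module.Dual F B) := Module.finite_of_finite F
  have hA : Module.finrank F (Module.Dual F A) = 2 := by
    rw [Subspace.dual_finrank_eq]; simp [A]
  have hB : Module.finrank F (Module.Dual F B) = m := by
    rw [Subspace.dual_finrank_eq]; simp [B]
  have : Nontrivial (Module.Dual F B) := Module.nontrivial_of_finrank_pos (R := F) (by omega)
  have hcard : Nat.card P ≤ n := by
    rw [Nat.card_prod, Module.natCard_eq_pow_finrank (K := F), hA,
      Projectivization.card_of_finrank F _ hB, Nat.card_eq_fintype_card]
    exact hn
  obtain ⟨b0, hb0⟩ := exists_ne (0 : Module.Dual F B)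
  have : Nonempty P := ⟨(0, Projectivization.mk F b0 hb0)⟩
  obtain ⟨s, hs⟩ : ∃ s : Fin n → P, Function.Surjective s := by
    have e := Finite.equivFin P
    refine ⟨Function.invFun (fun p => Fin.castLE hcard (e p)), Function.invFun_surjective ?_⟩
    exact (Fin.castLE_injective hcard).comp e.injective
  let g : Fin n → (A × B →ₗ[F] F) := fun i => (s i).1.coprod (s i).2.rep
  have hg : ∀ (a : Module.Dual F A) (b : Module.Dual F B), b ≠ 0 →
      ∃ (i : Fin n) (c : F), c ≠ 0 ∧ g i = c • (a.coprod b) := by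
    intro a b hb
    obtain ⟨c, hc⟩ := Projectivization.exists_smul_eq_mk_rep F b hb
    obtain ⟨i, hi⟩ := hs ((c : F) • a, Projectivization.mk F b hb)
    refine ⟨i, c, c.ne_zero, ?_⟩
    simp only [g, hi]
    rw [← hc]
    refine LinearMap.ext fun z => ?_
    simp [Units.smul_def, mul_add]
  let φ : A × B →ₗ[F] (Fin n → F) := LinearMap.pi g
  have hφ0 : ∀ z, φ z = 0 → ∀ (a : Module.Dual F A) (b : Module.Dual F B), b ≠ 0 →
      a z.1 + b z.2 = 0 := by
    intro z hz a b hb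
    obtain ⟨i, c, hc, h⟩ := hg a b hb
    have h1 : g i z = 0 := congrFun hz i
    rw [h] at h1
    simpa [hc] using h1
  have hφ : Function.Injective φ := by
    rw [← LinearMap.ker_eq_bot, LinearMap.ker_eq_bot']
    rintro ⟨x, y⟩ hz
    have h := hφ0 _ hz
    have hy : y = 0 := by
      rw [← Module.forall_dual_apply_eq_zero_iff F]
      intro b
      by_cases hb : b = 0
      · simp [hb]
      · simpa using h 0 b hb
    have hx : x = 0 := by
      rw [← Module.forall_dual_apply_eq_zero_iff F]
      intro a
      simpa [hy] using h a b0 hb0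
    rw [hx, hy]; rfl
  have hψ : Function.Injective (φ ∘ₗ LinearMap.inr F A B) := by
    rw [LinearMap.coe_comp]
    exact hφ.comp LinearMap.inr_injective
  refine ⟨LinearMap.range φ, LinearMap.range (φ ∘ₗ LinearMap.inr F A B), ?_, ?_, ?_, ?_, ?_⟩
  · rw [LinearMap.finrank_range_of_inj hφ]
    simp [A, B, add_comm]
  · rw [LinearMap.finrank_range_of_inj hψ]
    simp [B]
  · exact LinearMap.range_comp_le_range _ _
  · intro i hi
    apply (s i).2.rep_nonzero
    refine LinearMap.ext fun y => ?_
    have h1 : (φ ∘ₗ LinearMap.inr F A B) y ∈ coordHyp F n i := hi ⟨y, rfl⟩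
    have h2 : g i (0, y) = 0 := h1
    simpa [g] using h2
  · rintro Z ⟨⟨hZk, hZY⟩, -, hZ⟩
    have hmap : (Z.comap φ).map φ = Z := by
      rw [Submodule.map_comap_eq, inf_eq_right.2 hZY]
    have hfr : Module.finrank F (Z.comap φ) = m + 1 := by
      rw [(Submodule.equivMapOfInjective φ hφ (Z.comap φ)).finrank_eq, hmap, hZk]
    have hfE : Module.finrank F (A × B) = m + 2 := by simp [A, B, add_comm]
    obtain ⟨f, hf, hle⟩ := Submodule.exists_le_ker_of_lt_top (Z.comap φ) (by
      rw [lt_top_iff_ne_top]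
      intro ht
      rw [ht, finrank_top] at hfr
      omega)
    have hker : Z.comap φ = LinearMap.ker f := by
      apply Submodule.eq_of_le_of_finrank_eq hle
      have := Module.Dual.finrank_ker_add_one_of_ne_zero hf
      omega
    have hb : f ∘ₗ LinearMap.inr F A B = 0 := by
      by_contra hb
      obtain ⟨i, c, hc, h⟩ := hg (f ∘ₗ LinearMap.inl F A B) _ hb
      apply hZ i
      rw [← hmap, hker]
      rintro _ ⟨z, hz, rfl⟩
      have : g i z = 0 := by
        rw [h, ← LinearMap.coprod_comp_inl_inr f] at *
        simpa using Or.inr hz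
      exact this
    rintro _ ⟨y, rfl⟩
    have : (0, y) ∈ Z.comap φ := by
      rw [hker]
      exact LinearMap.congr_fun hb y
    exact this

theorem aux_forw {F : Type*} [Field F] [Fintype F] {n k : ℕ} (hk : 1 < k) (hkn : k < n - 1)
    (h : ∀ Y ∈ ndCodes F n (k + 1), isMaxClique F n k (tcOf F n k Y)) :
    n < gaussNum (Fintype.card F) (k + 1) - (Fintype.card F + 1) := by
  by_contra hn
  obtain ⟨m, rfl⟩ : ∃ m, k = m + 1 := ⟨k - 1, by omega⟩
  have hsum : gaussNum (Fintype.card F) (m + 1 + 1) =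
      Fintype.card F ^ 2 * gaussNum (Fintype.card F) m + (Fintype.card F + 1) := by
    unfold gaussNum
    rw [Finset.sum_range_succ', Finset.sum_range_succ', Finset.mul_sum]
    simp [pow_add, mul_comm, add_assoc, pow_two]
  obtain ⟨Y, W, hY, hW, hWY, hWn, hZ⟩ := aux_construct (F := F) (n := n) (m := m) (by omega)
    (by omega)
  have hYn : Y ∈ ndCodes F n (m + 1 + 1) := ⟨hY, fun i hi => hWn i (hWY.trans hi)⟩
  have hmax := h Y hYn
  obtain ⟨v, hv⟩ : ∃ v, v ∉ Y := by
    by_contra hc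
    push Not at hc
    have : Y = ⊤ := by rw [Submodule.eq_top_iff']; exact hc
    rw [this, finrank_top, Module.finrank_fin_fun] at hY
    omega
  have hv0 : v ≠ 0 := fun hc => hv (hc ▸ Y.zero_mem)
  let X := W ⊔ Submodule.span F {v}
  have hvX : v ∈ X := Submodule.mem_sup_right (Submodule.mem_span_singleton_self v)
  have hXY : ¬ X ≤ Y := fun hc => hv (hc hvX)
  have hX : Module.finrank F X = m + 1 := by
    have e := Submodule.finrank_sup_add_finrank_inf_eq W (Submodule.span F {v})
    rw [finrank_span_singleton hv0, hW] at e
    have l : Module.finrank F W < Module.finrank F X := by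
      apply Submodule.finrank_lt_finrank_of_lt
      exact lt_of_le_of_ne le_sup_left fun hc => hv (hWY (hc ▸ hvX))
    change Module.finrank F X + _ = _ at e
    omega
  have hXn : X ∈ ndCodes F n (m + 1) := ⟨hX, fun i hi => hWn i (le_sup_left.trans hi)⟩
  have hadj : ∀ Z ∈ tcOf F n (m + 1) Y, Module.finrank F ↥(X ⊓ Z) = m := by
    intro Z hZt
    have h1 : W ≤ X ⊓ Z := le_inf le_sup_left (hZ Z hZt)
    have h2 := Submodule.finrank_mono h1
    have h3 : Module.finrank F ↥(X ⊓ Z) < Module.finrank F X := by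
      apply Submodule.finrank_lt_finrank_of_lt
      refine lt_of_le_of_ne inf_le_left fun hc => hXY ?_
      rw [← hc]
      exact inf_le_right.trans hZt.1.2
    omega
  have hT : isClique F n (m + 1) (insert X (tcOf F n (m + 1) Y)) := by
    refine ⟨Set.insert_subset hXn hmax.1.1, ?_⟩
    rw [Set.pairwise_insert]
    refine ⟨hmax.1.2, fun Z hZt _ => ⟨hadj Z hZt, ?_⟩⟩
    unfold adjSub
    rw [inf_comm]
    exact hadj Z hZt
  have := hmax.2 _ hT (Set.subset_insert _ _)
  have hXt : X ∈ tcOf F n (m + 1) Y := this ▸ Set.mem_insert _ _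
  exact hXY hXt.1.2

/-- For `1 < k < n-1`, the set `T^c(Y)` is a maximal clique of
`Γ(n,k)_q` for every `Y ∈ C(n,k+1)_q` if and only if `[k+1]_q - (q+1) > n`. -/
theorem stmt_7 (q n k : ℕ) (F : Type*) [Field F] [Fintype F]
    (hF : Fintype.card F = q) (hk : 1 < k) (hkn : k < n - 1) :
    (∀ Y ∈ ndCodes F n (k + 1), isMaxClique F n k (tcOf F n k Y)) ↔
      n < gaussNum q (k + 1) - (q + 1) := by
  subst hF
  exact ⟨aux_forw hk hkn, fun h Y hY => aux_back hk h Y hY⟩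
end

section
/- Let q be a prime power, 1 < k < n−1, and let f : C(n,k)_q → G_k(V) be an injective map such that f(X) and f(Y) are adjacent whenever X, Y ∈ C(n,k)_q are adjacent. Then one of the following holds: (a) for every X ∈ C(n,k−1)_q there exists a (k−1)-dimensional subspace X' ⊂ V with f(S(X)) = S(X'); or (b) n = 2k and for every X ∈ C(n,k−1)_q there exists a (k+1)-dimensional subspace Y' ⊂ V with f(S(X)) = T(Y'). -/
section GrassAux

open Module

variable {F : Type*} [Field F] [Fintype F]
variable {W : Type*} [AddCommGroup W] [Module F W] [FiniteDimensional F W]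

theorem aux_card_points :
    {P : Submodule F W | finrank F P = 1}.ncard = gaussNum (Fintype.card F) (finrank F W) := by
  have h := Projectivization.card_of_finrank F W rfl
  rw [Nat.card_congr (Projectivization.equivSubmodule F W)] at h
  rw [gaussNum, ← Nat.card_eq_fintype_card, ← h]
  rfl

theorem aux_card_hyper :
    {P : Submodule F W | finrank F P + 1 = finrank F W}.ncard
      = gaussNum (Fintype.card F) (finrank F W) := by
  rw [← Subspace.dual_finrank_eq (K := F) (V := W), ← aux_card_points]
  refine Set.ncard_congr (fun P _ => P.dualAnnihilator) ?_ ?_ ?_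
  · intro P hP
    have := Subspace.finrank_add_finrank_dualAnnihilator_eq P
    simp only [Set.mem_setOf_eq, Subspace.dual_finrank_eq] at hP ⊢
    omega
  · intro P Q _ _ h
    exact Subspace.dualAnnihilator_inj.1 h
  · intro Q hQ
    refine ⟨Q.dualCoannihilator, ?_, Subspace.dualCoannihilator_dualAnnihilator_eq⟩
    have := Subspace.finrank_add_finrank_dualAnnihilator_eq Q.dualCoannihilator
    rw [Subspace.dualCoannihilator_dualAnnihilator_eq] at this
    simp only [Set.mem_setOf_eq, Subspace.dual_finrank_eq] at hQ ⊢
    omega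

theorem aux_finrank_comap_mkQ (X : Submodule F W) (Q : Submodule F (W ⧸ X)) :
    finrank F (Q.comap X.mkQ) = finrank F Q + finrank F X := by
  have h1 := Submodule.finrank_quotient_add_finrank (Q.comap X.mkQ)
  have h2 := Submodule.finrank_quotient_add_finrank Q
  have h3 := Submodule.finrank_quotient_add_finrank X
  have hle : X ≤ Q.comap X.mkQ := Submodule.le_comap_mkQ X Q
  have h4 := (Submodule.quotientQuotientEquivQuotient X (Q.comap X.mkQ) hle).finrank_eq
  rw [Submodule.map_comap_eq_of_surjective (Submodule.mkQ_surjective X)] at h4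
  omega

theorem aux_card_up (X : Submodule F W) :
    {P : Submodule F W | finrank F P = finrank F X + 1 ∧ X ≤ P}.ncard
      = gaussNum (Fintype.card F) (finrank F W - finrank F X) := by
  have h3 := Submodule.finrank_quotient_add_finrank X
  have : finrank F W - finrank F X = finrank F (W ⧸ X) := by omega
  rw [this, ← aux_card_points]
  symm
  refine Set.ncard_congr (fun Q _ => Q.comap X.mkQ) ?_ ?_ ?_
  · intro Q hQ
    simp only [Set.mem_setOf_eq] at hQ ⊢
    rw [aux_finrank_comap_mkQ, hQ]
    exact ⟨by omega, Submodule.le_comap_mkQ X Q⟩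
  · intro P Q _ _ h
    exact Submodule.comap_injective_of_surjective (Submodule.mkQ_surjective X) h
  · rintro P ⟨hP, hXP⟩
    have e : (P.map X.mkQ).comap X.mkQ = P := by
      rw [Submodule.comap_map_mkQ, sup_eq_right.2 hXP]
    refine ⟨P.map X.mkQ, ?_, e⟩
    have := aux_finrank_comap_mkQ X (P.map X.mkQ)
    rw [e] at this
    simp only [Set.mem_setOf_eq]
    omega

theorem aux_card_line (X Y : Submodule F W) (h : X ≤ Y) :
    {P : Submodule F W | finrank F P = finrank F X + 1 ∧ X ≤ P ∧ P ≤ Y}.ncard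
      = gaussNum (Fintype.card F) (finrank F Y - finrank F X) := by
  have hm : (X.comap Y.subtype).map Y.subtype = X := by
    rw [Submodule.map_comap_subtype, inf_eq_right.2 h]
  have hX : finrank F (X.comap Y.subtype) = finrank F X := by
    rw [← Submodule.finrank_map_subtype_eq, hm]
  rw [← hX, ← aux_card_up]
  symm
  refine Set.ncard_congr (fun Q _ => Q.map Y.subtype) ?_ ?_ ?_
  · rintro Q ⟨hQ, hQ2⟩
    refine ⟨by rw [Submodule.finrank_map_subtype_eq, hQ], ?_, Submodule.map_subtype_le Y Q⟩
    rw [← hm]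
    exact Submodule.map_mono hQ2
  · intro P Q _ _ h
    exact Submodule.map_injective_of_injective Y.injective_subtype h
  · rintro P ⟨hP, hXP, hPY⟩
    have e : (P.comap Y.subtype).map Y.subtype = P := by
      rw [Submodule.map_comap_subtype, inf_eq_right.2 hPY]
    refine ⟨P.comap Y.subtype, ⟨?_, Submodule.comap_mono hXP⟩, e⟩
    rw [← Submodule.finrank_map_subtype_eq, e, hP]

theorem aux_card_top (Y : Submodule F W) :
    {P : Submodule F W | finrank F P + 1 = finrank F Y ∧ P ≤ Y}.ncard
      = gaussNum (Fintype.card F) (finrank F Y) := by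
  rw [← aux_card_hyper]
  symm
  refine Set.ncard_congr (fun Q _ => Q.map Y.subtype) ?_ ?_ ?_
  · intro Q hQ
    exact ⟨by rw [Submodule.finrank_map_subtype_eq, hQ], Submodule.map_subtype_le Y Q⟩
  · intro P Q _ _ h
    exact Submodule.map_injective_of_injective Y.injective_subtype h
  · rintro P ⟨hP, hPY⟩
    have e : (P.comap Y.subtype).map Y.subtype = P := by
      rw [Submodule.map_comap_subtype, inf_eq_right.2 hPY]
    refine ⟨P.comap Y.subtype, ?_, e⟩
    simp only [Set.mem_setOf_eq]
    rw [← Submodule.finrank_map_subtype_eq, e, hP]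

/-- two distinct `k`-spaces in a `(k+1)`-space span it -/
theorem aux_sup_eq {k : ℕ} {A B Y : Submodule F W} (hA : finrank F A = k) (hB : finrank F B = k)
    (hne : A ≠ B) (hY : finrank F Y = k + 1) (hAY : A ≤ Y) (hBY : B ≤ Y) : A ⊔ B = Y := by
  have hlt : A < A ⊔ B := by
    refine lt_of_le_of_ne le_sup_left fun h => hne ?_
    have : B ≤ A := by rw [h]; exact le_sup_right
    exact (Submodule.eq_of_le_of_finrank_eq this (by omega)).symm
  have h1 := Submodule.finrank_lt_finrank_of_lt hlt
  have h2 := Submodule.finrank_mono (sup_le hAY hBY)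
  exact Submodule.eq_of_le_of_finrank_eq (sup_le hAY hBY) (by omega)

theorem aux_inf_eq {k : ℕ} {A B X : Submodule F W} (hA : finrank F A = k + 1)
    (hB : finrank F B = k + 1)
    (hne : A ≠ B) (hX : finrank F X = k) (hAX : X ≤ A) (hBX : X ≤ B) : A ⊓ B = X := by
  have hlt : A ⊓ B < A := by
    refine lt_of_le_of_ne inf_le_left fun h => hne ?_
    have : A ≤ B := by rw [← h]; exact inf_le_right
    exact (Submodule.eq_of_le_of_finrank_eq this (by omega))
  have h1 := Submodule.finrank_lt_finrank_of_lt hlt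
  have h2 := Submodule.finrank_mono (le_inf hAX hBX)
  exact (Submodule.eq_of_le_of_finrank_eq (le_inf hAX hBX) (by omega)).symm

/-- cliques in Grassmann graphs -/
theorem aux_clique_s9 {k : ℕ} (C : Set (Submodule F W)) (hC : ∀ P ∈ C, finrank F P = k + 1)
    (hadj : ∀ P ∈ C, ∀ Q ∈ C, P ≠ Q → finrank F ↥(P ⊓ Q) = k)
    (A B : Submodule F W) (hA : A ∈ C) (hB : B ∈ C) (hAB : A ≠ B) :
    (∃ X : Submodule F W, finrank F X = k ∧ ∀ P ∈ C, X ≤ P) ∨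
    (∃ Y : Submodule F W, finrank F Y = k + 2 ∧ ∀ P ∈ C, P ≤ Y) := by
  by_cases hall : ∀ P ∈ C, A ⊓ B ≤ P
  · exact Or.inl ⟨A ⊓ B, hadj A hA B hB hAB, hall⟩
  right
  push Not at hall
  obtain ⟨D, hD, hDX⟩ := hall
  have hX := hadj A hA B hB hAB
  have key : ∀ E ∈ C, ¬ A ⊓ B ≤ E → E ≤ A ⊔ B := by
    intro E hE hEX
    have hEA : E ≠ A := fun h => hEX (h ▸ inf_le_left)
    have hEB : E ≠ B := fun h => hEX (h ▸ inf_le_right)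
    have h1 := hadj E hE A hA hEA
    have h2 := hadj E hE B hB hEB
    have hne : E ⊓ A ≠ E ⊓ B := by
      intro h
      apply hEX
      have hle : E ⊓ A ≤ A ⊓ B := le_inf inf_le_right (h ▸ inf_le_right)
      rw [← Submodule.eq_of_le_of_finrank_eq hle (by omega)]
      exact inf_le_left
    rw [← aux_sup_eq h1 h2 hne (hC E hE) inf_le_left inf_le_left]
    exact sup_le_sup inf_le_right inf_le_right
  refine ⟨A ⊔ B, ?_, ?_⟩
  · have := Submodule.finrank_sup_add_finrank_inf_eq A B
    have := hC A hA
    have := hC B hB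
    omega
  · intro E hE
    by_cases hEX : A ⊓ B ≤ E
    · have hED : E ≠ D := fun h => hDX (h ▸ hEX)
      have h1 := hadj E hE D hD hED
      have hne : A ⊓ B ≠ E ⊓ D := fun h => hDX (h ▸ inf_le_right)
      rw [← aux_sup_eq hX h1 hne (hC E hE) hEX inf_le_left]
      exact sup_le (inf_le_left.trans le_sup_left) (inf_le_right.trans (key D hD hDX))
    · exact key E hE hEX

end GrassAux

section GrassMain

open Module

variable {F : Type*} [Field F] [Fintype F] {n m : ℕ}

theorem aux_gauss_succ (q d : ℕ) : gaussNum q (d + 1) = gaussNum q d + q ^ d :=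
  Finset.sum_range_succ _ _

theorem aux_gauss_two (q : ℕ) : gaussNum q 2 = q + 1 := by
  simp [gaussNum, Finset.sum_range_succ, add_comm]

theorem aux_gauss_three (q : ℕ) : gaussNum q 3 = q ^ 2 + q + 1 := by
  simp [gaussNum, Finset.sum_range_succ]; ring

theorem aux_gauss_mono (q : ℕ) {a b : ℕ} (h : a ≤ b) : gaussNum q a ≤ gaussNum q b :=
  Finset.sum_le_sum_of_subset (Finset.range_mono h)

theorem aux_gauss_lt (q : ℕ) (hq : 2 ≤ q) {a b : ℕ} (h : a < b) : gaussNum q a < gaussNum q b := by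
  have h1 := aux_gauss_mono q (Nat.succ_le_of_lt h)
  have h2 := aux_gauss_succ q a
  have h3 : 0 < q ^ a := by positivity
  have h4 : a.succ = a + 1 := rfl
  rw [h4] at h1
  omega

theorem aux_le_gauss (q : ℕ) (hq : 2 ≤ q) (d : ℕ) : d ≤ gaussNum q d := by
  induction d with
  | zero => simp
  | succ d ih =>
    have := aux_gauss_lt q hq (Nat.lt_succ_self d)
    simp only [Nat.succ_eq_add_one] at this
    omega

theorem aux_q : 2 ≤ Fintype.card F := Fintype.one_lt_card

theorem aux_card_star (X : Submodule F (Fin n → F)) (hX : finrank F X = m) :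
    (starOf F n (m + 1) X).ncard = gaussNum (Fintype.card F) (n - m) := by
  have := aux_card_up X
  rw [hX, finrank_fin_fun] at this
  exact this

theorem aux_card_topOf (Y : Submodule F (Fin n → F)) (hY : finrank F Y = m + 2) :
    (topOf F n (m + 1) Y).ncard = gaussNum (Fintype.card F) (m + 2) := by
  have := aux_card_top Y
  rw [hY] at this
  rw [← this]
  congr 1
  ext P
  simp [topOf]

theorem aux_card_line2 (X Y : Submodule F (Fin n → F)) (hX : finrank F X = m)
    (hY : finrank F Y = m + 2) (h : X ≤ Y) :
    {P : Submodule F (Fin n → F) | finrank F P = m + 1 ∧ X ≤ P ∧ P ≤ Y}.ncard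
      = Fintype.card F + 1 := by
  have := aux_card_line X Y h
  rw [hX, hY, show m + 2 - m = 2 by omega, aux_gauss_two] at this
  exact this

theorem aux_between (X Y : Submodule F (Fin n → F)) (h : X ≤ Y) (d : ℕ)
    (h1 : finrank F X ≤ d) (h2 : d ≤ finrank F Y) :
    ∃ Z : Submodule F (Fin n → F), X ≤ Z ∧ Z ≤ Y ∧ finrank F Z = d := by
  induction d, h1 using Nat.le_induction with
  | base => exact ⟨X, le_rfl, h, rfl⟩
  | succ d hd ih =>
    obtain ⟨Z, hXZ, hZY, hZ⟩ := ih (by omega)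
    have hc := aux_card_line Z Y hZY
    have := aux_le_gauss (Fintype.card F) aux_q (finrank F Y - finrank F Z)
    obtain ⟨P, hP, hZP, hPY⟩ := Set.nonempty_of_ncard_ne_zero
      (s := {P : Submodule F (Fin n → F) | finrank F P = finrank F Z + 1 ∧ Z ≤ P ∧ P ≤ Y})
      (by omega)
    exact ⟨P, hXZ.trans hZP, hPY, by omega⟩

theorem aux_nd_up {a b : ℕ} {X Y : Submodule F (Fin n → F)} (hX : X ∈ ndCodes F n a)
    (hXY : X ≤ Y) (hY : finrank F Y = b) : Y ∈ ndCodes F n b :=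
  ⟨hY, fun i h => hX.2 i (hXY.trans h)⟩

theorem aux_nd_one {a : ℕ} {Y : Submodule F (Fin n → F)} (h1 : (1 : Fin n → F) ∈ Y)
    (hY : finrank F Y = a) : Y ∈ ndCodes F n a := by
  refine ⟨hY, fun i h => ?_⟩
  have := h h1
  simp [coordHyp] at this

theorem aux_conn1 (P : Submodule F (Fin n → F) → Prop) (hm : 1 ≤ m)
    (hstep : ∀ X₁ ∈ ndCodes F n m, ∀ X₂ ∈ ndCodes F n m, finrank F ↥(X₁ ⊓ X₂) + 1 = m →
      (P X₁ ↔ P X₂))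
    (X₂ : Submodule F (Fin n → F)) (hX₂ : X₂ ∈ ndCodes F n m) (h1 : (1 : Fin n → F) ∈ X₂) (d : ℕ) :
    ∀ X₁ ∈ ndCodes F n m, m ≤ finrank F ↥(X₁ ⊓ X₂) + d → (P X₁ ↔ P X₂) := by
  induction d with
  | zero =>
    intro X₁ hX₁ h
    have hf1 := hX₁.1
    have hf2 := hX₂.1
    have a := Submodule.finrank_mono (inf_le_left : X₁ ⊓ X₂ ≤ X₁)
    have e1 := Submodule.eq_of_le_of_finrank_eq (inf_le_left : X₁ ⊓ X₂ ≤ X₁) (by omega)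
    have e2 := Submodule.eq_of_le_of_finrank_eq (inf_le_right : X₁ ⊓ X₂ ≤ X₂) (by omega)
    rw [← e1, e2]
  | succ d ih =>
    intro X₁ hX₁ h
    have hf1 := hX₁.1
    have hf2 := hX₂.1
    by_cases hne : X₁ = X₂
    · rw [hne]
    have hnle : ¬ X₂ ≤ X₁ := fun hle =>
      hne (Submodule.eq_of_le_of_finrank_eq hle (by omega)).symm
    have hnle' : ¬ X₁ ≤ X₂ := fun hle =>
      hne (Submodule.eq_of_le_of_finrank_eq hle (by omega))
    have hlt : X₁ ⊓ X₂ < X₁ := lt_of_le_of_ne inf_le_left (fun e => hnle' (inf_eq_left.1 e))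
    have hflt := Submodule.finrank_lt_finrank_of_lt hlt
    obtain ⟨A, hIA, hAX, hA⟩ := aux_between _ _ hlt.le (m - 1) (by omega) (by omega)
    obtain ⟨x, hx2, hx1, hx⟩ : ∃ x ∈ X₂, x ∉ X₁ ∧ (1 : Fin n → F) ∈ A ⊔ Submodule.span F {x} := by
      by_cases ho : (1 : Fin n → F) ∈ X₁
      · obtain ⟨x, hx2, hx1⟩ := SetLike.not_le_iff_exists.1 hnle
        exact ⟨x, hx2, hx1, Submodule.mem_sup_left (hIA ⟨ho, h1⟩)⟩
      · exact ⟨1, h1, ho, Submodule.mem_sup_right (Submodule.mem_span_singleton_self _)⟩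
    have hxmem : x ∈ A ⊔ Submodule.span F {x} :=
      Submodule.mem_sup_right (Submodule.mem_span_singleton_self _)
    have hltA : A < A ⊔ Submodule.span F {x} :=
      lt_of_le_of_ne le_sup_left (fun e => hx1 (hAX (e ▸ hxmem)))
    have hf3 := Submodule.finrank_lt_finrank_of_lt hltA
    have hf4 := Submodule.finrank_add_le_finrank_add_finrank A (Submodule.span F {x})
    have hf5 : finrank F (Submodule.span F {x}) ≤ 1 := by simpa using finrank_span_le_card (R := F) {x}
    have hnew : A ⊔ Submodule.span F {x} ∈ ndCodes F n m := aux_nd_one hx (by omega)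
    have hf6 := hnew.1
    have hinf : X₁ ⊓ (A ⊔ Submodule.span F {x}) = A :=
      aux_inf_eq (k := m - 1) (by omega) (by omega) (fun e => hx1 (e ▸ hxmem)) hA hAX le_sup_left
    have hlt2 : X₁ ⊓ X₂ < (A ⊔ Submodule.span F {x}) ⊓ X₂ := by
      refine lt_of_le_of_ne (le_inf (hIA.trans le_sup_left) inf_le_right) (fun e => hx1 ?_)
      have : x ∈ X₁ ⊓ X₂ := e ▸ ⟨hxmem, hx2⟩
      exact this.1
    have hf7 := Submodule.finrank_lt_finrank_of_lt hlt2
    rw [hstep X₁ hX₁ _ hnew (by rw [hinf]; omega)]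
    exact ih _ hnew (by omega)

theorem aux_conn (P : Submodule F (Fin n → F) → Prop) (hm : 1 ≤ m) (hmn : m ≤ n)
    (hstep : ∀ X₁ ∈ ndCodes F n m, ∀ X₂ ∈ ndCodes F n m, finrank F ↥(X₁ ⊓ X₂) + 1 = m →
      (P X₁ ↔ P X₂)) :
    ∀ X₁ ∈ ndCodes F n m, ∀ X₂ ∈ ndCodes F n m, (P X₁ ↔ P X₂) := by
  intro X₁ hX₁ X₂ hX₂
  have h5 : finrank F (Submodule.span F {(1 : Fin n → F)}) ≤ 1 := by
    simpa using finrank_span_le_card (R := F) {(1 : Fin n → F)}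
  obtain ⟨Z, hZ1, -, hZ⟩ := aux_between (Submodule.span F {(1 : Fin n → F)}) ⊤ le_top m
    (by omega) (by rw [finrank_top, finrank_fin_fun]; exact hmn)
  have hz : (1 : Fin n → F) ∈ Z := hZ1 (Submodule.mem_span_singleton_self _)
  have hZn := aux_nd_one hz hZ
  rw [aux_conn1 P hm hstep Z hZn hz m X₁ hX₁ (by omega),
    aux_conn1 P hm hstep Z hZn hz m X₂ hX₂ (by omega)]

theorem aux_tc_card (Y : Submodule F (Fin n → F)) (hY : Y ∈ ndCodes F n (m + 2)) :
    gaussNum (Fintype.card F) (m + 2) ≤ (tcOf F n (m + 1) Y).ncard + n := by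
  rw [← aux_card_topOf Y hY.1]
  have hsub : topOf F n (m + 1) Y ⊆
      tcOf F n (m + 1) Y ∪ (fun i => Y ⊓ coordHyp F n i) '' Set.univ := by
    intro P hP
    by_cases hnd : P ∈ ndCodes F n (m + 1)
    · exact Or.inl ⟨hP, hnd⟩
    · right
      obtain ⟨i, hi⟩ : ∃ i, P ≤ coordHyp F n i := by
        by_contra hcon
        push Not at hcon
        exact hnd ⟨hP.1, hcon⟩
      refine ⟨i, trivial, ?_⟩
      have hlt : Y ⊓ coordHyp F n i < Y :=
        lt_of_le_of_ne inf_le_left (fun e => hY.2 i (inf_eq_left.1 e))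
      have h1 := Submodule.finrank_lt_finrank_of_lt hlt
      have h2 := Submodule.finrank_mono (le_inf hP.2 hi)
      have h3 := hP.1
      have h4 := hY.1
      exact (Submodule.eq_of_le_of_finrank_eq (le_inf hP.2 hi) (by omega)).symm
  refine (Set.ncard_le_ncard hsub (Set.toFinite _)).trans ((Set.ncard_union_le _ _).trans ?_)
  have := Set.ncard_image_le (s := (Set.univ : Set (Fin n)))
    (f := fun i => Y ⊓ coordHyp F n i) (Set.toFinite _)
  rw [Set.ncard_univ, Nat.card_fin] at this
  omega

theorem aux_image_clique (f : Submodule F (Fin n → F) → Submodule F (Fin n → F))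
    (hmem : ∀ X ∈ ndCodes F n (m + 1), f X ∈ grass F n (m + 1))
    (hinj : Set.InjOn f (ndCodes F n (m + 1)))
    (hadj : ∀ X ∈ ndCodes F n (m + 1), ∀ Y ∈ ndCodes F n (m + 1),
      finrank F ↥(X ⊓ Y) = m → finrank F ↥(f X ⊓ f Y) = m)
    (C : Set (Submodule F (Fin n → F))) (hC : C ⊆ ndCodes F n (m + 1))
    (hCadj : ∀ P ∈ C, ∀ Q ∈ C, P ≠ Q → finrank F ↥(P ⊓ Q) = m) (hcard : 1 < C.ncard) :
    (∃ X : Submodule F (Fin n → F), finrank F X = m ∧ f '' C ⊆ starOf F n (m + 1) X) ∨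
    (∃ Y : Submodule F (Fin n → F), finrank F Y = m + 2 ∧ f '' C ⊆ topOf F n (m + 1) Y) := by
  obtain ⟨A, hA, B, hB, hAB⟩ := (Set.one_lt_ncard (Set.toFinite C)).1 hcard
  have h1 : ∀ P ∈ f '' C, finrank F P = m + 1 := by
    rintro _ ⟨P, hP, rfl⟩
    exact hmem P (hC hP)
  have h2 : ∀ P ∈ f '' C, ∀ Q ∈ f '' C, P ≠ Q → finrank F ↥(P ⊓ Q) = m := by
    rintro _ ⟨P, hP, rfl⟩ _ ⟨Q, hQ, rfl⟩ hne
    exact hadj P (hC hP) Q (hC hQ) (hCadj P hP Q hQ (fun e => hne (e ▸ rfl)))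
  rcases aux_clique_s9 (f '' C) h1 h2 (f A) (f B) ⟨A, hA, rfl⟩ ⟨B, hB, rfl⟩
    (fun e => hAB (hinj (hC hA) (hC hB) e)) with ⟨X, hX, h⟩ | ⟨Y, hY, h⟩
  · exact Or.inl ⟨X, hX, fun P hP => ⟨h1 P hP, h P hP⟩⟩
  · exact Or.inr ⟨Y, hY, fun P hP => ⟨h1 P hP, h P hP⟩⟩

theorem aux_image_star (f : Submodule F (Fin n → F) → Submodule F (Fin n → F))
    (hmem : ∀ X ∈ ndCodes F n (m + 1), f X ∈ grass F n (m + 1))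
    (hinj : Set.InjOn f (ndCodes F n (m + 1)))
    (hadj : ∀ X ∈ ndCodes F n (m + 1), ∀ Y ∈ ndCodes F n (m + 1),
      finrank F ↥(X ⊓ Y) = m → finrank F ↥(f X ⊓ f Y) = m)
    (hn : m + 3 ≤ n) (X : Submodule F (Fin n → F)) (hX : X ∈ ndCodes F n m) :
    (∃ X' : Submodule F (Fin n → F), finrank F X' = m ∧
      f '' starOf F n (m + 1) X = starOf F n (m + 1) X') ∨
    (∃ Y : Submodule F (Fin n → F), finrank F Y = m + 2 ∧
      f '' starOf F n (m + 1) X ⊆ topOf F n (m + 1) Y) := by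
  have hsub : starOf F n (m + 1) X ⊆ ndCodes F n (m + 1) := fun P hP => aux_nd_up hX hP.2 hP.1
  have hc := aux_card_star X hX.1
  have := aux_le_gauss (Fintype.card F) aux_q (n - m)
  rcases aux_image_clique f hmem hinj hadj _ hsub
    (fun P hP Q hQ hne => by rw [aux_inf_eq hP.1 hQ.1 hne hX.1 hP.2 hQ.2]; exact hX.1)
    (by omega) with ⟨X', hX', h⟩ | h
  · left
    refine ⟨X', hX', Set.eq_of_subset_of_ncard_le h ?_ (Set.toFinite _)⟩
    rw [(hinj.mono hsub).ncard_image, hc, aux_card_star X' hX']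
  · exact Or.inr h

theorem aux_mixed (f : Submodule F (Fin n → F) → Submodule F (Fin n → F))
    (hmem : ∀ X ∈ ndCodes F n (m + 1), f X ∈ grass F n (m + 1))
    (hinj : Set.InjOn f (ndCodes F n (m + 1)))
    (hadj : ∀ X ∈ ndCodes F n (m + 1), ∀ Y ∈ ndCodes F n (m + 1),
      finrank F ↥(X ⊓ Y) = m → finrank F ↥(f X ⊓ f Y) = m)
    (hn : m + 3 ≤ n) (X₁ X₂ X₁' Y₂' : Submodule F (Fin n → F))
    (hX₁ : X₁ ∈ ndCodes F n m) (hX₂ : X₂ ∈ ndCodes F n m) (h12 : finrank F ↥(X₁ ⊓ X₂) + 1 = m)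
    (hX₁' : finrank F X₁' = m) (hY₂' : finrank F Y₂' = m + 2)
    (h1 : f '' starOf F n (m + 1) X₁ ⊆ starOf F n (m + 1) X₁')
    (h2 : f '' starOf F n (m + 1) X₂ ⊆ topOf F n (m + 1) Y₂') : False := by
  have hs1 : starOf F n (m + 1) X₁ ⊆ ndCodes F n (m + 1) := fun P hP => aux_nd_up hX₁ hP.2 hP.1
  have hs2 : starOf F n (m + 1) X₂ ⊆ ndCodes F n (m + 1) := fun P hP => aux_nd_up hX₂ hP.2 hP.1
  have hd := Submodule.finrank_sup_add_finrank_inf_eq X₁ X₂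
  have hf1 := hX₁.1
  have hf2 := hX₂.1
  have hM : finrank F ↥(X₁ ⊔ X₂) = m + 1 := by omega
  have hM1 : X₁ ⊔ X₂ ∈ starOf F n (m + 1) X₁ := ⟨hM, le_sup_left⟩
  have hM2 : X₁ ⊔ X₂ ∈ starOf F n (m + 1) X₂ := ⟨hM, le_sup_right⟩
  have hXY : X₁' ≤ Y₂' := (h1 ⟨_, hM1, rfl⟩).2.trans (h2 ⟨_, hM2, rfl⟩).2
  set M := X₁ ⊔ X₂ with hMdef
  set L := {P : Submodule F (Fin n → F) | finrank F P = m + 1 ∧ X₁' ≤ P ∧ P ≤ Y₂'} with hL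
  have hLc : L.ncard = Fintype.card F + 1 := aux_card_line2 X₁' Y₂' hX₁' hY₂' hXY
  have hq : 2 ≤ Fintype.card F := aux_q
  have hsum : ∀ P ∈ starOf F n (m + 1) X₁, ¬ f P ≤ Y₂' → finrank F ↥(P ⊔ M) = m + 2 := by
    intro P hP hPY
    have hne : P ≠ M := fun e => hPY (e ▸ (h2 ⟨_, hM2, rfl⟩).2)
    have a := aux_inf_eq hP.1 hM hne hX₁.1 hP.2 hM1.2
    have b := Submodule.finrank_sup_add_finrank_inf_eq P M
    rw [a] at b
    have := hP.1
    omega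
  have key : ∀ P ∈ starOf F n (m + 1) X₁, ¬ f P ≤ Y₂' →
      f '' {Q | finrank F Q = m + 1 ∧ X₂ ≤ Q ∧ Q ≤ P ⊔ M} = L := by
    intro P hP hPY
    have hsub : {Q : Submodule F (Fin n → F) | finrank F Q = m + 1 ∧ X₂ ≤ Q ∧ Q ≤ P ⊔ M}
      ⊆ starOf F n (m + 1) X₂ := fun Q hQ => ⟨hQ.1, hQ.2.1⟩
    refine Set.eq_of_subset_of_ncard_le ?_ ?_ (Set.toFinite _)
    · rintro _ ⟨Q, hQ, rfl⟩
      have hfQ := h2 ⟨Q, hsub hQ, rfl⟩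
      refine ⟨hfQ.1, ?_, hfQ.2⟩
      have hne : P ≠ Q := fun e => hPY (e ▸ hfQ.2)
      have e1 := aux_sup_eq hP.1 hQ.1 hne (hsum P hP hPY) le_sup_left hQ.2.2
      have e2 := Submodule.finrank_sup_add_finrank_inf_eq P Q
      rw [e1, hsum P hP hPY, hP.1, hQ.1] at e2
      have e3 := hadj P (hs1 hP) Q (hs2 (hsub hQ)) (by omega)
      have hfP := h1 ⟨P, hP, rfl⟩
      have hlt : f P ⊓ Y₂' < f P := lt_of_le_of_ne inf_le_left (fun e => hPY (inf_eq_left.1 e))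
      have e4 := Submodule.finrank_lt_finrank_of_lt hlt
      have e5 := hfP.1
      have e6 : f P ⊓ f Q ≤ f P ⊓ Y₂' := inf_le_inf_left _ hfQ.2
      have e7 : X₁' ≤ f P ⊓ Y₂' := le_inf hfP.2 hXY
      have e8 := Submodule.finrank_mono e6
      have e9 := Submodule.eq_of_le_of_finrank_eq e6 (by omega)
      rw [← e9] at e7
      exact e7.trans inf_le_right
    · rw [(hinj.mono (hsub.trans hs2)).ncard_image,
        aux_card_line2 X₂ (P ⊔ M) hX₂.1 (hsum P hP hPY) (hM2.2.trans le_sup_right), hLc]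
  by_cases hex : ∃ P ∈ starOf F n (m + 1) X₁, ¬ f P ≤ Y₂'
  · obtain ⟨P, hP, hPY⟩ := hex
    have hcover : f '' starOf F n (m + 1) X₁ ⊆
        L ∪ f '' {Q | finrank F Q = m + 1 ∧ X₁ ≤ Q ∧ Q ≤ P ⊔ M} := by
      rintro _ ⟨R, hR, rfl⟩
      by_cases hRY : f R ≤ Y₂'
      · exact Or.inl ⟨(h1 ⟨R, hR, rfl⟩).1, (h1 ⟨R, hR, rfl⟩).2, hRY⟩
      · right
        refine ⟨R, ⟨hR.1, hR.2, ?_⟩, rfl⟩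
        have hc := aux_card_line2 X₂ (P ⊔ M) hX₂.1 (hsum P hP hPY) (hM2.2.trans le_sup_right)
        obtain ⟨Q, hQ, hQM⟩ := Set.exists_ne_of_one_lt_ncard
          (s := {Q : Submodule F (Fin n → F) | finrank F Q = m + 1 ∧ X₂ ≤ Q ∧ Q ≤ P ⊔ M})
          (by omega) M
        have hfQ : f Q ∈ L := by rw [← key P hP hPY]; exact ⟨Q, hQ, rfl⟩
        rw [← key R hR hRY] at hfQ
        obtain ⟨Q', hQ', e⟩ := hfQ
        have : Q' = Q := hinj (hs2 ⟨hQ'.1, hQ'.2.1⟩) (hs2 ⟨hQ.1, hQ.2.1⟩) e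
        subst this
        have a1 := aux_sup_eq hQ.1 hM hQM (hsum P hP hPY) hQ.2.2 le_sup_right
        have a2 := aux_sup_eq hQ.1 hM hQM (hsum R hR hRY) hQ'.2.2 le_sup_right
        rw [← a1, a2]
        exact le_sup_left
    have c1 := Set.ncard_le_ncard hcover (Set.toFinite _)
    have c2 := Set.ncard_union_le L (f '' {Q | finrank F Q = m + 1 ∧ X₁ ≤ Q ∧ Q ≤ P ⊔ M})
    have c3 := Set.ncard_image_le (f := f)
      (s := {Q : Submodule F (Fin n → F) | finrank F Q = m + 1 ∧ X₁ ≤ Q ∧ Q ≤ P ⊔ M})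
      (Set.toFinite _)
    rw [aux_card_line2 X₁ (P ⊔ M) hX₁.1 (hsum P hP hPY) (hM1.2.trans le_sup_right)] at c3
    rw [(hinj.mono hs1).ncard_image, aux_card_star X₁ hX₁.1] at c1
    have c4 := aux_gauss_mono (Fintype.card F) (show 3 ≤ n - m by omega)
    rw [aux_gauss_three] at c4
    nlinarith
  · push Not at hex
    have hcover : f '' starOf F n (m + 1) X₁ ⊆ L := by
      rintro _ ⟨R, hR, rfl⟩
      exact ⟨(h1 ⟨R, hR, rfl⟩).1, (h1 ⟨R, hR, rfl⟩).2, hex R hR⟩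
    have c1 := Set.ncard_le_ncard hcover (Set.toFinite _)
    rw [(hinj.mono hs1).ncard_image, aux_card_star X₁ hX₁.1] at c1
    have c4 := aux_gauss_mono (Fintype.card F) (show 3 ≤ n - m by omega)
    rw [aux_gauss_three] at c4
    nlinarith

theorem aux_small (f : Submodule F (Fin n → F) → Submodule F (Fin n → F))
    (hmem : ∀ X ∈ ndCodes F n (m + 1), f X ∈ grass F n (m + 1))
    (hinj : Set.InjOn f (ndCodes F n (m + 1)))
    (hadj : ∀ X ∈ ndCodes F n (m + 1), ∀ Y ∈ ndCodes F n (m + 1),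
      finrank F ↥(X ⊓ Y) = m → finrank F ↥(f X ⊓ f Y) = m)
    (hn : m + 3 ≤ n) (hn2 : n < 2 * (m + 1)) (X Y' : Submodule F (Fin n → F))
    (hX : X ∈ ndCodes F n m) (hY' : finrank F Y' = m + 2)
    (h : f '' starOf F n (m + 1) X ⊆ topOf F n (m + 1) Y') : False := by
  have hq : 2 ≤ Fintype.card F := aux_q
  have hpow : ∀ d : ℕ, 2 ≤ d → d + 2 ≤ 2 ^ d := by
    intro d hd
    induction d, hd using Nat.le_induction with
    | base => norm_num
    | succ d hd ih => rw [pow_succ]; omega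
  have p1 := hpow m (by omega)
  have p2 : 2 ^ m ≤ Fintype.card F ^ m := Nat.pow_le_pow_left hq m
  have p3 : 2 * Fintype.card F ^ m ≤ Fintype.card F ^ (m + 1) := by rw [pow_succ, mul_comm]; gcongr
  have g1 := aux_gauss_succ (Fintype.card F) m
  have g2 : gaussNum (Fintype.card F) (m + 2) = _ := aux_gauss_succ (Fintype.card F) (m + 1)
  have g3 := aux_le_gauss (Fintype.card F) hq m
  have hs : starOf F n (m + 1) X ⊆ ndCodes F n (m + 1) := fun P hP => aux_nd_up hX hP.2 hP.1
  have hf := hX.1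
  have key : ∀ Y : Submodule F (Fin n → F), finrank F Y = m + 2 → X ≤ Y →
      f '' tcOf F n (m + 1) Y ⊆ topOf F n (m + 1) Y' := by
    intro Y hY hXY
    have hYn : Y ∈ ndCodes F n (m + 2) := aux_nd_up hX hXY hY
    have hc := aux_tc_card Y hYn
    have hsubn : tcOf F n (m + 1) Y ⊆ ndCodes F n (m + 1) := fun P hP => hP.2
    have hcl : ∀ P ∈ tcOf F n (m + 1) Y, ∀ Q ∈ tcOf F n (m + 1) Y, P ≠ Q →
        finrank F ↥(P ⊓ Q) = m := by
      intro P hP Q hQ hne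
      have a := aux_sup_eq hP.1.1 hQ.1.1 hne hY hP.1.2 hQ.1.2
      have b := Submodule.finrank_sup_add_finrank_inf_eq P Q
      rw [a, hY, hP.1.1, hQ.1.1] at b
      omega
    rcases aux_image_clique f hmem hinj hadj (tcOf F n (m + 1) Y) hsubn hcl (by omega) with
      ⟨Z, hZ, hsub⟩ | ⟨Z, hZ, hsub⟩
    · exfalso
      have c1 := Set.ncard_le_ncard hsub (Set.toFinite _)
      rw [(hinj.mono hsubn).ncard_image, aux_card_star Z hZ] at c1
      have c2 := aux_gauss_mono (Fintype.card F) (show n - m ≤ m + 1 by omega)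
      omega
    · have hl := aux_card_line2 X Y hX.1 hY hXY
      obtain ⟨A, hA, B, hB, hAB⟩ := (Set.one_lt_ncard (Set.toFinite _)).1
        (show 1 < {P : Submodule F (Fin n → F) | finrank F P = m + 1 ∧ X ≤ P ∧ P ≤ Y}.ncard by
          omega)
      have hA1 : A ∈ starOf F n (m + 1) X := ⟨hA.1, hA.2.1⟩
      have hB1 : B ∈ starOf F n (m + 1) X := ⟨hB.1, hB.2.1⟩
      have hA2 := hsub ⟨A, ⟨⟨hA.1, hA.2.2⟩, hs hA1⟩, rfl⟩
      have hB2 := hsub ⟨B, ⟨⟨hB.1, hB.2.2⟩, hs hB1⟩, rfl⟩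
      have hA3 := h ⟨A, hA1, rfl⟩
      have hB3 := h ⟨B, hB1, rfl⟩
      have hne : f A ≠ f B := fun e => hAB (hinj (hs hA1) (hs hB1) e)
      have e1 := aux_sup_eq hA2.1 hB2.1 hne hZ hA2.2 hB2.2
      have e2 := aux_sup_eq hA2.1 hB2.1 hne hY' hA3.2 hB3.2
      rw [← e2, e1]
      exact hsub
  obtain ⟨Z, hXZ, -, hZ⟩ := aux_between X ⊤ le_top (m + 1) (by omega)
    (by rw [finrank_top, finrank_fin_fun]; omega)
  have hcs := aux_card_star (m := m + 1) Z hZ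
  have := aux_gauss_mono (Fintype.card F) (show 2 ≤ n - (m + 1) by omega)
  rw [aux_gauss_two] at this
  obtain ⟨Y₁, hY₁, Y₂, hY₂, hne⟩ := (Set.one_lt_ncard (Set.toFinite _)).1
    (show 1 < (starOf F n (m + 1 + 1) Z).ncard by omega)
  have k1 := key Y₁ hY₁.1 (hXZ.trans hY₁.2)
  have k2 := key Y₂ hY₂.1 (hXZ.trans hY₂.2)
  have t1 := aux_tc_card Y₁ (aux_nd_up hX (hXZ.trans hY₁.2) hY₁.1)
  have t2 := aux_tc_card Y₂ (aux_nd_up hX (hXZ.trans hY₂.2) hY₂.1)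
  have hi : (tcOf F n (m + 1) Y₁ ∩ tcOf F n (m + 1) Y₂).ncard ≤ 1 := by
    refine (Set.ncard_le_one (Set.toFinite _)).2 ?_
    rintro A ⟨hA1, hA2⟩ B ⟨hB1, hB2⟩
    by_contra hAB
    exact hne ((aux_sup_eq hA1.1.1 hB1.1.1 hAB hY₁.1 hA1.1.2 hB1.1.2).symm.trans
      (aux_sup_eq hA1.1.1 hB1.1.1 hAB hY₂.1 hA2.1.2 hB2.1.2))
  have hu := Set.ncard_union_add_ncard_inter (tcOf F n (m + 1) Y₁) (tcOf F n (m + 1) Y₂)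
  have hun : tcOf F n (m + 1) Y₁ ∪ tcOf F n (m + 1) Y₂ ⊆ ndCodes F n (m + 1) :=
    Set.union_subset (fun P hP => hP.2) (fun P hP => hP.2)
  have hfin : f '' (tcOf F n (m + 1) Y₁ ∪ tcOf F n (m + 1) Y₂) ⊆ topOf F n (m + 1) Y' := by
    rw [Set.image_union]
    exact Set.union_subset k1 k2
  have c1 := Set.ncard_le_ncard hfin (Set.toFinite _)
  rw [(hinj.mono hun).ncard_image, aux_card_topOf Y' hY'] at c1
  omega

theorem aux_main (f : Submodule F (Fin n → F) → Submodule F (Fin n → F))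
    (hmem : ∀ X ∈ ndCodes F n (m + 1), f X ∈ grass F n (m + 1))
    (hinj : Set.InjOn f (ndCodes F n (m + 1)))
    (hadj : ∀ X ∈ ndCodes F n (m + 1), ∀ Y ∈ ndCodes F n (m + 1),
      finrank F ↥(X ⊓ Y) = m → finrank F ↥(f X ⊓ f Y) = m)
    (hm : 1 ≤ m) (hn : m + 3 ≤ n) :
    (∀ X ∈ ndCodes F n m, ∃ X' : Submodule F (Fin n → F),
        finrank F ↥X' = m ∧ f '' starOf F n (m + 1) X = starOf F n (m + 1) X') ∨
    (n = 2 * (m + 1) ∧ ∀ X ∈ ndCodes F n m, ∃ Y' : Submodule F (Fin n → F),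
        finrank F ↥Y' = m + 2 ∧ f '' starOf F n (m + 1) X = topOf F n (m + 1) Y') := by
  have hst := aux_image_star f hmem hinj hadj hn
  have hs : ∀ X ∈ ndCodes F n m, starOf F n (m + 1) X ⊆ ndCodes F n (m + 1) :=
    fun X hX P hP => aux_nd_up hX hP.2 hP.1
  rcases lt_trichotomy n (2 * (m + 1)) with hlt | heq | hgt
  · left
    intro X hX
    rcases hst X hX with h | ⟨Y, hY, h⟩
    · exact h
    · exact (aux_small f hmem hinj hadj hn hlt X Y hX hY h).elim
  · by_cases hall : ∀ X ∈ ndCodes F n m, ∃ X' : Submodule F (Fin n → F),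
        finrank F ↥X' = m ∧ f '' starOf F n (m + 1) X = starOf F n (m + 1) X'
    · exact Or.inl hall
    right
    refine ⟨heq, ?_⟩
    push Not at hall
    obtain ⟨X₀, hX₀, h0⟩ := hall
    have hconn := aux_conn (fun X => ∃ X' : Submodule F (Fin n → F),
        finrank F ↥X' = m ∧ f '' starOf F n (m + 1) X = starOf F n (m + 1) X') hm (by omega) ?_
    · intro X hX
      rcases hst X hX with h | ⟨Y, hY, h⟩
      · obtain ⟨X', hX', h'⟩ := (hconn X hX X₀ hX₀).1 h
        exact (h0 X' hX' h').elim
      · refine ⟨Y, hY, Set.eq_of_subset_of_ncard_le h ?_ (Set.toFinite _)⟩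
        rw [(hinj.mono (hs X hX)).ncard_image, aux_card_star X hX.1, aux_card_topOf Y hY,
          show n - m = m + 2 by omega]
    · intro X₁ hX₁ X₂ hX₂ h12
      constructor
      · rintro ⟨X', hX', h'⟩
        rcases hst X₂ hX₂ with h | ⟨Y, hY, h⟩
        · exact h
        · exact (aux_mixed f hmem hinj hadj hn X₁ X₂ X' Y hX₁ hX₂ h12 hX' hY h'.le h).elim
      · rintro ⟨X', hX', h'⟩
        rcases hst X₁ hX₁ with h | ⟨Y, hY, h⟩
        · exact h
        · exact (aux_mixed f hmem hinj hadj hn X₂ X₁ X' Y hX₂ hX₁ (by rw [inf_comm]; exact h12)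
            hX' hY h'.le h).elim
  · left
    intro X hX
    rcases hst X hX with h | ⟨Y, hY, h⟩
    · exact h
    · exfalso
      have c1 := Set.ncard_le_ncard h (Set.toFinite _)
      rw [(hinj.mono (hs X hX)).ncard_image, aux_card_star X hX.1, aux_card_topOf Y hY] at c1
      have := aux_gauss_lt (Fintype.card F) aux_q (show m + 2 < n - m by omega)
      omega

end GrassMain

/-- For an injective adjacency-preserving `f : C(n,k)_q → G_k(V)`,
either `f` sends every maximal star `S(X)`, `X ∈ C(n,k-1)_q`, to a star of `Γ_k(V)`,
or `n = 2k` and `f` sends every such maximal star to a top of `Γ_k(V)`. -/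
theorem stmt_9 (q n k : ℕ) (F : Type*) [Field F] [Fintype F]
    (hF : Fintype.card F = q) (hk : 1 < k) (hkn : k < n - 1)
    (f : Submodule F (Fin n → F) → Submodule F (Fin n → F))
    (hmem : ∀ X ∈ ndCodes F n k, f X ∈ grass F n k)
    (hinj : Set.InjOn f (ndCodes F n k))
    (hadj : ∀ X ∈ ndCodes F n k, ∀ Y ∈ ndCodes F n k,
      adjSub F n k X Y → adjSub F n k (f X) (f Y)) :
    (∀ X ∈ ndCodes F n (k - 1), ∃ X' : Submodule F (Fin n → F),
        Module.finrank F ↥X' = k - 1 ∧ f '' starOf F n k X = starOf F n k X') ∨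
    (n = 2 * k ∧ ∀ X ∈ ndCodes F n (k - 1), ∃ Y' : Submodule F (Fin n → F),
        Module.finrank F ↥Y' = k + 1 ∧ f '' starOf F n k X = topOf F n k Y') := by
  obtain ⟨m, rfl⟩ : ∃ m, k = m + 1 := ⟨k - 1, by omega⟩
  exact aux_main f hmem hinj hadj (by omega) (by omega)
end

section
/- Let q be a prime power, 1 < k < n−1, and let f : C(n,k)_q → G_k(V) be an injective map sending adjacent pairs to adjacent pairs, such that for every X ∈ C(n,k−1)_q the image f(S(X)) is a star of Γ_k(V) (i.e., equals S(X') for some (k−1)-dimensional subspace X'). Then for every (k−1)-dimensional subspace X ⊂ V such that S^c(X) is a maximal clique of Γ(n,k)_q, there exists a (k−1)-dimensional subspace X' ⊂ V with f(S^c(X)) ⊆ S(X'). -/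
section helpers
variable {F V : Type*} [Field F] [AddCommGroup V] [Module F V] [FiniteDimensional F V]

theorem aux_eq {A B : Submodule F V} {k : ℕ} (h : A ≤ B) (hA : Module.finrank F A = k)
    (hB : Module.finrank F B = k) : A = B :=
  Submodule.eq_of_le_of_finrank_eq h (by omega)

theorem aux_exists_notMem {A B : Submodule F V}
    (h : Module.finrank F A < Module.finrank F B) : ∃ b ∈ B, b ∉ A := by
  by_contra! hc
  have := Submodule.finrank_mono (show B ≤ A from hc)
  omega

theorem aux_span_le {Z Y : Submodule F V} {b : V} (hZ : Z ≤ Y) (hb : b ∈ Y) :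
    Z ⊔ Submodule.span F {b} ≤ Y :=
  sup_le hZ ((Submodule.span_singleton_le_iff_mem b Y).2 hb)

theorem aux_mem_span (Z : Submodule F V) (b : V) : b ∈ Z ⊔ Submodule.span F {b} :=
  Submodule.mem_sup_right (Submodule.mem_span_singleton_self b)

theorem aux_sub (X : Submodule F V) : ∀ d, d ≤ Module.finrank F X →
    ∃ H ≤ X, Module.finrank F H = d := by
  intro d
  induction d with
  | zero => intro _; exact ⟨⊥, bot_le, by simp⟩
  | succ d ih =>
    intro h
    obtain ⟨H, hH, hd⟩ := ih (by omega)
    obtain ⟨b, hb, hbH⟩ := aux_exists_notMem (A := H) (B := X) (by omega)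
    exact ⟨_, aux_span_le hH hb, by rw [Submodule.finrank_sup_span_singleton hbH, hd]⟩

/-- three pairwise adjacent subspaces -/
theorem aux_tri {P Q R : Submodule F V} {k : ℕ} (hk : 1 ≤ k)
    (hR : Module.finrank F R = k) (hPQ : Module.finrank F ↥(P ⊓ Q) = k - 1)
    (hRP : Module.finrank F ↥(R ⊓ P) = k - 1) (hRQ : Module.finrank F ↥(R ⊓ Q) = k - 1) :
    R ≤ P ⊔ Q ∨ P ⊓ Q ≤ R := by
  by_cases h : R ⊓ P = R ⊓ Q
  · right
    have h1 : R ⊓ P = P ⊓ Q :=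
      aux_eq (le_inf inf_le_right (h ▸ inf_le_right)) hRP hPQ
    rw [← h1]; exact inf_le_left
  · left
    have h1 : R ⊓ P < R ⊓ P ⊔ R ⊓ Q := by
      refine lt_of_le_of_ne le_sup_left fun h2 => h ?_
      have h3 : R ⊓ Q ≤ R ⊓ P := by rw [h2]; exact le_sup_right
      exact (aux_eq h3 hRQ hRP).symm
    have h2 := Submodule.finrank_lt_finrank_of_lt h1
    have h3 : R ⊓ P ⊔ R ⊓ Q ≤ R := sup_le inf_le_left inf_le_left
    have h4 : R ⊓ P ⊔ R ⊓ Q = R := Submodule.eq_of_le_of_finrank_le h3 (by omega)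
    rw [← h4]
    exact sup_le_sup inf_le_right inf_le_right

theorem aux_sup {P Q : Submodule F V} {k : ℕ} (hk : 1 ≤ k)
    (hP : Module.finrank F P = k) (hQ : Module.finrank F Q = k) 
    (hPQ : Module.finrank F ↥(P ⊓ Q) = k - 1) : Module.finrank F ↥(P ⊔ Q) = k + 1 := by
  have := Submodule.finrank_sup_add_finrank_inf_eq P Q
  omega

theorem aux_inf {P Q Y : Submodule F V} {k : ℕ} (hk : 1 ≤ k)
    (hP : Module.finrank F P = k) (hQ : Module.finrank F Q = k) (hne : P ≠ Q)
    (hY : Module.finrank F Y = k + 1) (hPY : P ≤ Y) (hQY : Q ≤ Y) :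
    Module.finrank F ↥(P ⊓ Q) = k - 1 := by
  have h := Submodule.finrank_sup_add_finrank_inf_eq P Q
  have h1 := Submodule.finrank_mono (sup_le hPY hQY)
  have h2 : P < P ⊔ Q := by
    refine lt_of_le_of_ne le_sup_left fun h2 => hne ?_
    have : Q ≤ P := by rw [h2]; exact le_sup_right
    exact (aux_eq this hQ hP).symm
  have h3 := Submodule.finrank_lt_finrank_of_lt h2
  omega

theorem aux_inf' {P Q Z : Submodule F V} {k : ℕ} (hk : 1 ≤ k)
    (hP : Module.finrank F P = k) (hQ : Module.finrank F Q = k) (hne : P ≠ Q)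
    (hZ : Module.finrank F Z = k - 1) (hPZ : Z ≤ P) (hQZ : Z ≤ Q) : P ⊓ Q = Z := by
  symm
  refine Submodule.eq_of_le_of_finrank_le (le_inf hPZ hQZ) ?_
  have h2 : P ⊓ Q < P := by
    refine lt_of_le_of_ne inf_le_left fun h2 => hne ?_
    have : P ≤ Q := by rw [← h2]; exact inf_le_right
    exact aux_eq this hP hQ
  have h3 := Submodule.finrank_lt_finrank_of_lt h2
  omega

theorem aux_line [Fintype F] {Z Y : Submodule F V} {k : ℕ} (hk : 1 ≤ k) (hZY : Z ≤ Y)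
    (hZ : Module.finrank F Z = k - 1) (hY : Module.finrank F Y = k + 1) :
    {C : Submodule F V | (Module.finrank F C = k ∧ Z ≤ C) ∧ C ≤ Y}.ncard
      = Nat.card (Option F) := by
  obtain ⟨a, ha, haZ⟩ := aux_exists_notMem (A := Z) (B := Y) (by omega)
  have hA := Submodule.finrank_sup_span_singleton haZ
  set A := Z ⊔ Submodule.span F {a} with hAdef
  obtain ⟨b, hb, hbA⟩ := aux_exists_notMem (A := A) (B := Y) (by omega)
  have haA : a ∈ A := aux_mem_span Z a
  have hZA : Z ≤ A := le_sup_left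
  have hv : ∀ t : F, b + t • a ∉ A := fun t h =>
    hbA (by simpa using A.sub_mem h (A.smul_mem t haA))
  have hg : ∀ t : F, Module.finrank F ↥(Z ⊔ Submodule.span F {b + t • a}) = k := fun t => by
    rw [Submodule.finrank_sup_span_singleton (fun h => hv t (hZA h))]; omega
  let g : Option F → Submodule F V := fun o =>
    o.elim A (fun t => Z ⊔ Submodule.span F {b + t • a})
  have hginj : Function.Injective g := by
    have h0 : ∀ t, A ≠ Z ⊔ Submodule.span F {b + t • a} := fun t h =>
      hv t (h ▸ aux_mem_span Z _)
    rintro (_ | t) (_ | s) h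
    · rfl
    · exact absurd h (h0 s)
    · exact absurd h.symm (h0 t)
    · by_contra hne
      have hts : t - s ≠ 0 := fun h => hne (by rw [sub_eq_zero.1 h])
      change Z ⊔ Submodule.span F {b + t • a} = Z ⊔ Submodule.span F {b + s • a} at h
      set C := Z ⊔ Submodule.span F {b + t • a} with hC
      have h1 : b + t • a ∈ C := aux_mem_span Z _
      have h2 : b + s • a ∈ C := h ▸ aux_mem_span Z _
      have h3 : (t - s) • a ∈ C := by
        have := C.sub_mem h1 h2
        rwa [add_sub_add_left_eq_sub, ← sub_smul] at this
      have h4 : a ∈ C := (C.smul_mem_iff hts).1 h3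
      have h5 : A = C := aux_eq (aux_span_le le_sup_left h4) (k := k) (by omega) (hg t)
      exact h0 t h5
  have hrange : {C : Submodule F V | (Module.finrank F C = k ∧ Z ≤ C) ∧ C ≤ Y}
      = Set.range g := by
    ext C
    constructor
    · rintro ⟨⟨hCk, hZC⟩, hCY⟩
      by_cases hCA : C = A
      · exact ⟨none, hCA.symm⟩
      · obtain ⟨c, hc, hcZ⟩ : ∃ c ∈ C, c ∉ A := by
          by_contra! hcon
          exact hCA (aux_eq (show C ≤ A from hcon) hCk (by omega))
        have hYA : A ⊔ Submodule.span F {b} = Y :=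
          aux_eq (aux_span_le (aux_span_le hZY ha) hb) (k := k + 1)
            (by rw [Submodule.finrank_sup_span_singleton hbA]; omega) hY
        have hcY := hCY hc
        rw [← hYA] at hcY
        obtain ⟨y, hy, z, hz, rfl⟩ := Submodule.mem_sup.1 hcY
        obtain ⟨s, rfl⟩ := Submodule.mem_span_singleton.1 hz
        obtain ⟨z, hz', w, hw, rfl⟩ := Submodule.mem_sup.1 hy
        obtain ⟨r, rfl⟩ := Submodule.mem_span_singleton.1 hw
        have hs : s ≠ 0 := by
          rintro rfl
          apply hcZ
          simpa using hy
        refine ⟨some (s⁻¹ * r), ?_⟩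
        refine aux_eq (aux_span_le hZC ?_) (hg _) hCk
        have h1 : r • a + s • b ∈ C := by
          have := C.sub_mem hc (hZC hz')
          convert this using 1
          abel
        have h2 := C.smul_mem s⁻¹ h1
        rw [smul_add, smul_smul, smul_smul, inv_mul_cancel₀ hs, one_smul, add_comm] at h2
        exact h2
    · rintro ⟨_ | t, rfl⟩
      · exact ⟨⟨by change Module.finrank F A = k; omega, hZA⟩, aux_span_le hZY ha⟩
      · exact ⟨⟨hg t, le_sup_left⟩, aux_span_le hZY (Y.add_mem hb (Y.smul_mem t ha))⟩
  rw [hrange, ← Set.image_univ, Set.ncard_image_of_injective _ hginj, Set.ncard_univ]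

end helpers

/-- If an injective adjacency-preserving `f : C(n,k)_q → G_k(V)` sends
every maximal star `S(X)`, `X ∈ C(n,k-1)_q`, to a star of `Γ_k(V)`, then `f` sends every
star `S^c(X)` of `Γ(n,k)_q` (i.e. every maximal-clique `S^c(X)`) into a star of `Γ_k(V)`. -/
theorem stmt_10 (q n k : ℕ) (F : Type*) [Field F] [Fintype F]
    (hF : Fintype.card F = q) (hk : 1 < k) (hkn : k < n - 1)
    (f : Submodule F (Fin n → F) → Submodule F (Fin n → F))
    (hmem : ∀ X ∈ ndCodes F n k, f X ∈ grass F n k)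
    (hinj : Set.InjOn f (ndCodes F n k))
    (hadj : ∀ X ∈ ndCodes F n k, ∀ Y ∈ ndCodes F n k,
      adjSub F n k X Y → adjSub F n k (f X) (f Y))
    (hstar : ∀ X ∈ ndCodes F n (k - 1), ∃ X' : Submodule F (Fin n → F),
      Module.finrank F ↥X' = k - 1 ∧ f '' starOf F n k X = starOf F n k X') :
    ∀ X : Submodule F (Fin n → F), Module.finrank F ↥X = k - 1 →
      isMaxClique F n k (scOf F n k X) →
      ∃ X' : Submodule F (Fin n → F),
        Module.finrank F ↥X' = k - 1 ∧ f '' scOf F n k X ⊆ starOf F n k X' := by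
  intro X hX hmax
  by_cases hnd : ∀ i : Fin n, ¬ X ≤ coordHyp F n i
  · obtain ⟨X', h1, h2⟩ := hstar X ⟨hX, hnd⟩
    exact ⟨X', h1, h2 ▸ Set.image_mono Set.inter_subset_left⟩
  push Not at hnd
  obtain ⟨i, hi⟩ := hnd
  have hk1 : 1 ≤ k := by omega
  obtain ⟨H, hHX, hH⟩ := aux_sub X (k - 2) (by omega)
  let e : Fin n → F := fun _ => 1
  have heC : ∀ j, e ∉ coordHyp F n j := fun j h => by
    simp [coordHyp, e] at h
  have heX : e ∉ X := fun h => heC i (hi h)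
  have hAk : Module.finrank F ↥(X ⊔ Submodule.span F {e}) = k := by
    rw [Submodule.finrank_sup_span_singleton heX]; omega
  have hZk : Module.finrank F ↥(H ⊔ Submodule.span F {e}) = k - 1 := by
    rw [Submodule.finrank_sup_span_singleton (fun h => heX (hHX h))]; omega
  have heA := aux_mem_span X e
  have heZ := aux_mem_span H e
  have hXA : X ≤ X ⊔ Submodule.span F {e} := le_sup_left
  have hZA : H ⊔ Submodule.span F {e} ≤ X ⊔ Submodule.span F {e} := sup_le_sup_right hHX _
  have hXZ : ∀ B, X ≤ B → H ⊔ Submodule.span F {e} ≤ B → X ⊔ Submodule.span F {e} ≤ B :=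
    fun B h1 h2 => sup_le h1 (le_trans le_sup_right h2)
  generalize X ⊔ Submodule.span F {e} = A at *
  generalize H ⊔ Submodule.span F {e} = Z at *
  have hend : ∀ B, e ∈ B → ∀ j, ¬ B ≤ coordHyp F n j := fun B h j hB => heC j (hB h)
  have hAnd : A ∈ ndCodes F n k := ⟨hAk, hend _ heA⟩
  have hASc : A ∈ scOf F n k X := ⟨⟨hAk, hXA⟩, hAnd⟩
  have hZst : ∀ C ∈ starOf F n k Z, C ∈ ndCodes F n k := fun C hC =>
    ⟨hC.1, hend _ (hC.2 heZ)⟩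
  have hBne : ∀ B ∈ scOf F n k X, B ≠ A → ¬ Z ≤ B := fun B hB hne hZB =>
    hne (aux_eq (hXZ B hB.1.2 hZB) hAk hB.1.1).symm
  -- adjacency of the image
  have hfadj : ∀ B ∈ scOf F n k X, ∀ C ∈ scOf F n k X, B ≠ C →
      Module.finrank F ↥(f B ⊓ f C) = k - 1 := fun B hB C hC hne =>
    hadj B hB.2 C hC.2 (hmax.1.2 hB hC hne)
  -- existence of `B₁, B₂`
  have hex : ∃ B₁ ∈ scOf F n k X, ∃ B₂ ∈ scOf F n k X, B₁ ≠ A ∧ ¬ B₂ ≤ A ⊔ B₁ := by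
    by_contra! hcon
    have hY : ∃ Y : Submodule F (Fin n → F), Module.finrank F Y = k + 1 ∧ A ≤ Y ∧
        ∀ B ∈ scOf F n k X, B ≤ Y := by
      by_cases h1 : ∃ B₁ ∈ scOf F n k X, B₁ ≠ A
      · obtain ⟨B₁, hB₁, hne⟩ := h1
        refine ⟨A ⊔ B₁, aux_sup hk1 hAk hB₁.1.1 (hmax.1.2 hASc hB₁ hne.symm), le_sup_left, ?_⟩
        exact fun B hB => hcon B₁ hB₁ B hB hne
      · push Not at h1
        obtain ⟨b, -, hb⟩ := aux_exists_notMem (A := A) (B := ⊤) (by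
          rw [hAk, finrank_top, Module.finrank_fin_fun]; omega)
        refine ⟨A ⊔ Submodule.span F {b}, ?_, le_sup_left, fun B hB => ?_⟩
        · rw [Submodule.finrank_sup_span_singleton hb, hAk]
        · rw [h1 B hB]; exact le_sup_left
    obtain ⟨Y, hYk, hAY, hall⟩ := hY
    have hT : tcOf F n k Y = scOf F n k X := by
      refine hmax.2 _ ⟨Set.inter_subset_right, ?_⟩ fun B hB => ⟨⟨hB.1.1, hall B hB⟩, hB.2⟩
      intro B hB C hC hne
      exact aux_inf hk1 hB.1.1 hC.1.1 hne hYk hB.1.2 hC.1.2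
    obtain ⟨b, hb, hbA⟩ := aux_exists_notMem (A := A) (B := Y) (by omega)
    have hCk : Module.finrank F ↥(Z ⊔ Submodule.span F {b}) = k := by
      rw [Submodule.finrank_sup_span_singleton (fun h => hbA (hZA h))]; omega
    have hC : Z ⊔ Submodule.span F {b} ∈ tcOf F n k Y :=
      ⟨⟨hCk, aux_span_le (hZA.trans hAY) hb⟩, hZst _ ⟨hCk, le_sup_left⟩⟩
    rw [hT] at hC
    refine hBne _ hC (fun h => hbA ?_) le_sup_left
    rw [← h]; exact aux_mem_span Z b
  obtain ⟨B₁, hB₁, B₂, hB₂, hne₁, hnle⟩ := hex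
  have hne₂ : B₂ ≠ A := fun h => hnle (h ▸ le_sup_left)
  have hne₁₂ : B₂ ≠ B₁ := fun h => hnle (h ▸ le_sup_right)
  obtain ⟨Z', hZ'k, hZ'⟩ := hstar Z ⟨hZk, hend _ heZ⟩
  have hfst : ∀ C ∈ starOf F n k Z, f C ∈ starOf F n k Z' := fun C hC =>
    hZ' ▸ Set.mem_image_of_mem f hC
  have hAst : A ∈ starOf F n k Z := ⟨hAk, hZA⟩
  have hfk : ∀ B ∈ scOf F n k X, Module.finrank F (f B) = k := fun B hB => hmem B hB.2
  -- lines go into lines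
  have hline : ∀ B ∈ scOf F n k X, B ≠ A → ∀ C ∈ starOf F n k Z, C ≤ A ⊔ B →
      f C ≤ f A ⊔ f B := by
    intro B hB hne C hC hCB
    by_cases hCA : C = A
    · rw [hCA]; exact le_sup_left
    have hABk := aux_sup hk1 hAk hB.1.1 (hmax.1.2 hASc hB hne.symm)
    have hCnd := hZst C hC
    have hCBne : C ≠ B := fun h => hBne B hB hne (h ▸ hC.2)
    have hBC : adjSub F n k B C :=
      aux_inf hk1 hB.1.1 hC.1 hCBne.symm hABk le_sup_right hCB
    have hAC : adjSub F n k A C :=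
      aux_inf hk1 hAk hC.1 (Ne.symm hCA) hABk le_sup_left hCB
    have hfAC := hadj A hAnd C hCnd hAC
    have hfBC := hadj B hB.2 C hCnd hBC
    have hfne : f A ≠ f C := fun h => hCA (hinj hAnd hCnd h).symm
    have hfBA := hfadj B hB A hASc hne
    rcases aux_tri hk1 (hfk B hB) hfAC hfBA hfBC with h | h
    · have h1 : f A ⊔ f B = f A ⊔ f C :=
        aux_eq (sup_le le_sup_left h)
          (aux_sup hk1 (hfk A hASc) (hfk B hB) (hfadj A hASc B hB hne.symm))
          (aux_sup hk1 (hfk A hASc) (hfst C hC).1 hfAC)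
      rw [h1]; exact le_sup_right
    · exfalso
      rw [aux_inf' hk1 (hfk A hASc) (hfst C hC).1 hfne hZ'k (hfst A hAst).2 (hfst C hC).2] at h
      have h2 : f B ∈ f '' starOf F n k Z := by rw [hZ']; exact ⟨hfk B hB, h⟩
      obtain ⟨D, hD, hDB⟩ := h2
      have := hinj (hZst D hD) hB.2 hDB
      exact hBne B hB hne (this ▸ hD.2)
  have hW := aux_sup hk1 (hfk A hASc) (hfk B₁ hB₁) (hfadj A hASc B₁ hB₁ hne₁.symm)
  have hU := aux_sup hk1 hAk hB₁.1.1 (hmax.1.2 hASc hB₁ hne₁.symm)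
  -- the key point
  have hkey : ¬ f B₂ ≤ f A ⊔ f B₁ := by
    intro hle
    have hc1 := aux_line hk1 (hZA.trans le_sup_left) hZk hU
    have hc2 := aux_line hk1 ((hfst A hAst).2.trans le_sup_left) hZ'k hW
    have himg : f '' {C : Submodule F (Fin n → F) | (Module.finrank F C = k ∧ Z ≤ C) ∧ C ≤ A ⊔ B₁} =
        {C : Submodule F (Fin n → F) | (Module.finrank F C = k ∧ Z' ≤ C) ∧ C ≤ f A ⊔ f B₁} := by
      refine Set.eq_of_subset_of_ncard_le ?_ ?_ (Set.toFinite _)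
      · rintro _ ⟨C, hC, rfl⟩
        exact ⟨hfst C hC.1, hline B₁ hB₁ hne₁ C hC.1 hC.2⟩
      · rw [Set.ncard_image_of_injOn (hinj.mono fun C hC => hZst C hC.1), hc1, hc2]
    obtain ⟨b, hb, hbA⟩ : ∃ b ∈ B₂, b ∉ A := by
      by_contra! hcon
      exact hne₂ (aux_eq (show B₂ ≤ A from hcon) hB₂.1.1 hAk)
    have hCk : Module.finrank F ↥(Z ⊔ Submodule.span F {b}) = k := by
      rw [Submodule.finrank_sup_span_singleton (fun h => hbA (hZA h))]; omega
    have hCst : Z ⊔ Submodule.span F {b} ∈ starOf F n k Z := ⟨hCk, le_sup_left⟩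
    have hCle : Z ⊔ Submodule.span F {b} ≤ A ⊔ B₂ :=
      aux_span_le (hZA.trans le_sup_left) (Submodule.mem_sup_right hb)
    have hfC := (hline B₂ hB₂ hne₂ _ hCst hCle).trans (sup_le le_sup_left hle)
    have hfC2 : f (Z ⊔ Submodule.span F {b}) ∈
        {C : Submodule F (Fin n → F) | (Module.finrank F C = k ∧ Z' ≤ C) ∧ C ≤ f A ⊔ f B₁} := ⟨hfst _ hCst, hfC⟩
    rw [← himg] at hfC2
    obtain ⟨D, hD, hDC⟩ := hfC2
    have hDC' := hinj (hZst D hD.1) (hZst _ hCst) hDC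
    have hbU : b ∈ A ⊔ B₁ := hD.2 (hDC' ▸ aux_mem_span Z b)
    have h1 : A ⊔ Submodule.span F {b} = A ⊔ B₁ :=
      aux_eq (aux_span_le le_sup_left hbU)
        (by rw [Submodule.finrank_sup_span_singleton hbA, hAk]) hU
    have h2 : A ⊔ Submodule.span F {b} = A ⊔ B₂ :=
      aux_eq (aux_span_le le_sup_left (Submodule.mem_sup_right hb))
        (by rw [Submodule.finrank_sup_span_singleton hbA, hAk])
        (aux_sup hk1 hAk hB₂.1.1 (hmax.1.2 hASc hB₂ hne₂.symm))
    exact hnle (by rw [← h1, h2]; exact le_sup_right)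
  -- conclusion
  have hX'k := hfadj A hASc B₁ hB₁ hne₁.symm
  have hX2k := hfadj A hASc B₂ hB₂ hne₂.symm
  have h2 : f A ⊓ f B₁ ≤ f B₂ :=
    (aux_tri hk1 (hfk B₂ hB₂) hX'k (hfadj B₂ hB₂ A hASc hne₂)
      (hfadj B₂ hB₂ B₁ hB₁ hne₁₂)).resolve_left hkey
  have heq : f A ⊓ f B₁ = f A ⊓ f B₂ := aux_eq (le_inf inf_le_left h2) hX'k hX2k
  refine ⟨f A ⊓ f B₁, hX'k, ?_⟩
  rintro _ ⟨D, hD, rfl⟩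
  refine ⟨hfk D hD, ?_⟩
  by_cases hDA : D = A
  · rw [hDA]; exact inf_le_left
  by_cases hD1 : D = B₁
  · rw [hD1]; exact inf_le_right
  by_cases hD2 : D = B₂
  · rw [hD2]; exact h2
  rcases aux_tri hk1 (hfk D hD) hX'k (hfadj D hD A hASc hDA) (hfadj D hD B₁ hB₁ hD1) with h | h
  · rcases aux_tri hk1 (hfk D hD) hX2k (hfadj D hD A hASc hDA) (hfadj D hD B₂ hB₂ hD2) with h' | h'
    · exfalso
      have hADk := aux_sup hk1 (hfk A hASc) (hfk D hD) (hfadj A hASc D hD (Ne.symm hDA))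
      have e1 : f A ⊔ f D = f A ⊔ f B₁ := aux_eq (sup_le le_sup_left h) hADk hW
      have e2 : f A ⊔ f D = f A ⊔ f B₂ := aux_eq (sup_le le_sup_left h') hADk
        (aux_sup hk1 (hfk A hASc) (hfk B₂ hB₂) hX2k)
      exact hkey (by rw [← e1, e2]; exact le_sup_right)
    · rw [heq]; exact h'
  · exact h
end

section
/- Let q ≥ 3 be a prime power, n ≥ 4, and V = F_q^n. Let f : C(n,2)_q → G_2(V) be an injective map sending adjacent pairs to adjacent pairs such that for every P ∈ C(n,1)_q the image f(S(P)) is a star of Γ_2(V) (equals S(P') for some 1-dimensional P'). Suppose g : G_1(V) → G_1(V) satisfies f(S^c(P)) ⊆ S(g(P)) for every 1-dimensional subspace P ⊂ V. Then g is bijective. -/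
section helpers
variable {F : Type*} [Field F] {n : ℕ}

theorem aux_sup_s11 {P T : Submodule F (Fin n → F)} (hP : Module.finrank F P = 1)
    (hT : Module.finrank F T = 1) (h : P ≠ T) : Module.finrank F ↥(P ⊔ T) = 2 := by
  have h1 := Submodule.finrank_sup_add_finrank_inf_eq P T
  have h2 : Module.finrank F ↥(P ⊓ T) ≠ 1 := by
    intro h3
    have a : P ⊓ T = P := Submodule.eq_of_le_of_finrank_eq inf_le_left (by rw [h3, hP])
    have b : P ⊓ T = T := Submodule.eq_of_le_of_finrank_eq inf_le_right (by rw [h3, hT])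
    exact h (a.symm.trans b)
  have h4 : Module.finrank F ↥(P ⊓ T) ≤ Module.finrank F P :=
    Submodule.finrank_mono inf_le_left
  omega

theorem aux_eq_s11 {P T X : Submodule F (Fin n → F)} (hP : Module.finrank F P = 1)
    (hT : Module.finrank F T = 1) (h : P ≠ T) (hX : Module.finrank F X = 2)
    (h1 : P ≤ X) (h2 : T ≤ X) : P ⊔ T = X :=
  Submodule.eq_of_le_of_finrank_eq (sup_le h1 h2) (by rw [aux_sup_s11 hP hT h, hX])

theorem aux_good [Fintype F] (hq : 3 ≤ Fintype.card F) (hn : 4 ≤ n)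
    (W : Submodule F (Fin n → F)) (hW : Module.finrank F W = 2) :
    ∃ T ∈ ndCodes F n 1, ¬ T ≤ W := by
  classical
  obtain ⟨a, ha0, ha1⟩ : ∃ a : F, a ≠ 0 ∧ a ≠ 1 := by
    have : ({0, 1} : Finset F) ≠ Finset.univ := by
      intro h
      have h1 := Finset.card_le_two (a := (0 : F)) (b := 1)
      rw [h, Finset.card_univ] at h1
      omega
    by_contra! hc
    apply this
    ext x
    simp only [Finset.mem_insert, Finset.mem_singleton, Finset.mem_univ, iff_true]
    by_cases hx : x = 0
    · exact Or.inl hx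
    · exact Or.inr (hc x hx)
  suffices h : ∃ v : Fin n → F, (∀ i, v i ≠ 0) ∧ v ∉ W by
    obtain ⟨v, hv, hvW⟩ := h
    refine ⟨Submodule.span F {v}, ⟨finrank_span_singleton ?_, ?_⟩, ?_⟩
    · rintro rfl
      exact hvW W.zero_mem
    · intro i hi
      exact hv i (hi (Submodule.mem_span_singleton_self v))
    · intro h
      exact hvW (h (Submodule.mem_span_singleton_self v))
  by_contra! hc
  have htop : W = ⊤ := by
    rw [eq_top_iff]
    intro x _
    rw [pi_eq_sum_univ' x]
    refine W.sum_mem fun i _ => W.smul_mem _ ?_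
    have h1 : (fun _ => 1 : Fin n → F) ∈ W := hc _ (fun _ => one_ne_zero)
    have h2 : (fun j => if i = j then a else 1 : Fin n → F) ∈ W := by
      refine hc _ (fun j => ?_)
      split_ifs
      · exact ha0
      · exact one_ne_zero
    have h3 := W.smul_mem (a - 1)⁻¹ (W.sub_mem h2 h1)
    convert h3 using 1
    have : a - 1 ≠ 0 := sub_ne_zero.mpr ha1
    ext j
    by_cases hj : i = j
    · subst hj; simp [this]
    · have hj' : j ≠ i := fun h => hj h.symm
      simp [hj, hj']
  rw [htop, finrank_top, Module.finrank_fin_fun] at hW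
  omega

end helpers

/-- (`q ≥ 3`, `n ≥ 4`, `k = 2`.) Let `f : C(n,2)_q → G_2(V)` be
injective, adjacency-preserving, sending each maximal star `S(P)`, `P ∈ C(n,1)_q`, to a
star of `Γ_2(V)`. If `g : G_1(V) → G_1(V)` satisfies `f(S^c(P)) ⊆ S(g(P))` for every
1-dimensional `P`, then `g` is bijective. -/
theorem stmt_11 (q n : ℕ) (F : Type*) [Field F] [Fintype F]
    (hF : Fintype.card F = q) (hq : 3 ≤ q) (hn : 4 ≤ n)
    (f : Submodule F (Fin n → F) → Submodule F (Fin n → F))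
    (hmem : ∀ X ∈ ndCodes F n 2, f X ∈ grass F n 2)
    (hinj : Set.InjOn f (ndCodes F n 2))
    (hadj : ∀ X ∈ ndCodes F n 2, ∀ Y ∈ ndCodes F n 2,
      adjSub F n 2 X Y → adjSub F n 2 (f X) (f Y))
    (hstar : ∀ P ∈ ndCodes F n 1, ∃ P' : Submodule F (Fin n → F),
      Module.finrank F ↥P' = 1 ∧ f '' starOf F n 2 P = starOf F n 2 P')
    (g : Submodule F (Fin n → F) → Submodule F (Fin n → F))
    (hgmem : ∀ P ∈ grass F n 1, g P ∈ grass F n 1)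
    (hg : ∀ P ∈ grass F n 1, f '' scOf F n 2 P ⊆ starOf F n 2 (g P)) :
    Set.BijOn g (grass F n 1) (grass F n 1) := by
  subst hF
  -- stars of good points go onto the star of their image under g
  have key : ∀ P ∈ ndCodes F n 1, f '' starOf F n 2 P = starOf F n 2 (g P) := by
    intro P hP
    obtain ⟨P', hP', he⟩ := hstar P hP
    have hgP : Module.finrank F ↥(g P) = 1 := hgmem P hP.1
    have hsub : starOf F n 2 P' ⊆ starOf F n 2 (g P) := by
      rw [← he]
      rintro _ ⟨Y, hY, rfl⟩
      exact hg P hP.1 ⟨Y, ⟨hY, hY.1, fun i hi => hP.2 i (hY.2.trans hi)⟩, rfl⟩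
    by_cases hne : P' = g P
    · rw [he, hne]
    · exfalso
      obtain ⟨T, hT, hTW⟩ := aux_good hq hn _ (aux_sup_s11 hP' hgP hne)
      have hPT : P' ≠ T := fun h => hTW (h ▸ le_sup_left)
      have h2 := aux_sup_s11 hP' hT.1 hPT
      have h3 := hsub (show P' ⊔ T ∈ starOf F n 2 P' from ⟨h2, le_sup_left⟩)
      have h4 := aux_eq_s11 hP' hgP hne h2 le_sup_left h3.2
      exact hTW (h4 ▸ le_sup_right)
  have joinmem : ∀ Q ∈ grass F n 1, ∀ T ∈ ndCodes F n 1, Q ≠ T →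
      Q ⊔ T ∈ ndCodes F n 2 := by
    intro Q hQ T hT hne
    exact ⟨aux_sup_s11 hQ hT.1 hne, fun i hi => hT.2 i (le_sup_right.trans hi)⟩
  have case1 : ∀ P ∈ ndCodes F n 1, ∀ Q ∈ grass F n 1, P ≠ Q → g P ≠ g Q := by
    intro P hP Q hQ hne hgg
    obtain ⟨T, hT, hTW⟩ := aux_good hq hn _ (aux_sup_s11 hP.1 hQ hne)
    have hQT : Q ≠ T := fun h => hTW (h ▸ le_sup_right)
    have hX := joinmem Q hQ T hT hQT
    have h1 := hg Q hQ ⟨Q ⊔ T, ⟨⟨hX.1, le_sup_left⟩, hX⟩, rfl⟩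
    rw [← hgg, ← key P hP] at h1
    obtain ⟨Y, hY, hYX⟩ := h1
    have hYX' : Y = Q ⊔ T :=
      hinj ⟨hY.1, fun i hi => hP.2 i (hY.2.trans hi)⟩ hX hYX
    have h4 := aux_eq_s11 hP.1 hQ hne hX.1 (hYX' ▸ hY.2) le_sup_left
    exact hTW (h4 ▸ le_sup_right)
  have inj : Set.InjOn g (grass F n 1) := by
    intro P hP Q hQ hgg
    by_contra hne
    obtain ⟨T, hT, hTW⟩ := aux_good hq hn _ (aux_sup_s11 hP hQ hne)
    have hPT : P ≠ T := fun h => hTW (h ▸ le_sup_left)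
    have hQT : Q ≠ T := fun h => hTW (h ▸ le_sup_right)
    have im : ∀ R ∈ grass F n 1, R ≠ T → g R ⊔ g T = f (R ⊔ T) := by
      intro R hR hRT
      have hX := joinmem R hR T hT hRT
      have h1 := hg R hR ⟨R ⊔ T, ⟨⟨hX.1, le_sup_left⟩, hX⟩, rfl⟩
      have h2 := hg T hT.1 ⟨R ⊔ T, ⟨⟨hX.1, le_sup_right⟩, hX⟩, rfl⟩
      exact aux_eq_s11 (hgmem R hR) (hgmem T hT.1) (case1 T hT R hR hRT.symm).symm h1.1 h1.2 h2.2
    have e : P ⊔ T = Q ⊔ T := by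
      refine hinj (joinmem P hP T hT hPT) (joinmem Q hQ T hT hQT) ?_
      rw [← im P hP hPT, ← im Q hQ hQT, hgg]
    have h4 := aux_eq_s11 hP hQ hne (joinmem P hP T hT hPT).1 le_sup_left (e ▸ le_sup_left)
    exact hTW (h4 ▸ le_sup_right)
  have : Finite (Submodule F (Fin n → F)) := inferInstance
  exact (Set.Finite.injOn_iff_bijOn_of_mapsTo (Set.toFinite (grass F n 1)) hgmem).mp inj
end

section
/- Let q ≥ 3 be a prime power, n ≥ 4, and V = F_q^n. For every 2-dimensional subspace X ⊂ V that does not belong to C(n,2)_q, there exist X_1, X_2 ∈ C(n,1)_q such that X + X_1 and X + X_2 are distinct elements of C(n,3)_q and both T^c(X + X_1) and T^c(X + X_2) are maximal cliques of Γ(n,2)_q. -/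
theorem aux_mem_coordHyp {F : Type*} [Field F] {n : ℕ} {i : Fin n} {v : Fin n → F} :
    v ∈ coordHyp F n i ↔ v i = 0 := by
  simp [coordHyp]

theorem aux_nd {F : Type*} [Field F] {n k : ℕ} {L : Submodule F (Fin n → F)}
    {u : Fin n → F} (hL : Module.finrank F L = k) (huL : u ∈ L) (hu : ∀ m, u m ≠ 0) :
    L ∈ ndCodes F n k :=
  ⟨hL, fun i hi => hu i (aux_mem_coordHyp.1 (hi huL))⟩

theorem aux_pair_finrank {F : Type*} [Field F] {n : ℕ} {v w : Fin n → F}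
    (h : LinearIndependent F ![v, w]) :
    Module.finrank F (Submodule.span F ({v, w} : Set (Fin n → F))) = 2 := by
  have := finrank_span_eq_card h
  have hr : Set.range ![v, w] = {v, w} := by
    ext y
    simp [eq_comm, or_comm]
  rw [hr] at this
  simpa using this

theorem aux_max {F : Type*} [Field F] {n : ℕ} {Z : Submodule F (Fin n → F)}
    (hZ : Module.finrank F Z = 3) {v w : Fin n → F} (hvZ : v ∈ Z) (hwZ : w ∈ Z)
    (hv : ∀ m, v m ≠ 0) (hw : ∀ m, w m ≠ 0) (hvw : LinearIndependent F ![v, w]) :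
    isMaxClique F n 2 (tcOf F n 2 Z) := by
  refine ⟨⟨fun L hL => hL.2, ?_⟩, ?_⟩
  · intro L hL M hM hne
    have h1 := Submodule.finrank_sup_add_finrank_inf_eq L M
    have h2 : Module.finrank F ↥(L ⊔ M) ≤ 3 :=
      hZ ▸ Submodule.finrank_mono (sup_le hL.1.2 hM.1.2)
    have hL1 := hL.1.1
    have hM1 := hM.1.1
    have h3 : Module.finrank F ↥(L ⊓ M) < 2 := by
      by_contra hcon
      have e1 : L ⊓ M = L := Submodule.eq_of_le_of_finrank_le inf_le_left (by omega)
      have e2 : L ⊓ M = M := Submodule.eq_of_le_of_finrank_le inf_le_right (by omega)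
      exact hne (e1.symm.trans e2)
    show Module.finrank F ↥(L ⊓ M) = 2 - 1
    omega
  · intro T hT hsub
    refine Set.Subset.antisymm ?_ hsub
    intro Y hY
    have hYnd := hT.1 hY
    by_cases hYZ : Y ≤ Z
    · exact ⟨⟨hYnd.1, hYZ⟩, hYnd⟩
    exfalso
    have hP : Module.finrank F ↥(Y ⊓ Z) < 2 := by
      by_contra hcon
      have h1 := hYnd.1
      have e1 : Y ⊓ Z = Y := Submodule.eq_of_le_of_finrank_le inf_le_left (by omega)
      exact hYZ (inf_eq_left.1 e1)
    obtain ⟨u, huZ, hu, huP⟩ : ∃ u ∈ Z, (∀ m, u m ≠ 0) ∧ u ∉ Y ⊓ Z := by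
      by_contra hcon
      push Not at hcon
      have h1 := hcon v hvZ hv
      have h2 := hcon w hwZ hw
      have h3 : Submodule.span F ({v, w} : Set (Fin n → F)) ≤ Y ⊓ Z := by
        rw [Submodule.span_le]
        rintro x (rfl | rfl)
        · exact h1
        · exact h2
      have h4 := Submodule.finrank_mono h3
      rw [aux_pair_finrank hvw] at h4
      omega
    have hu0 : u ≠ 0 := fun h => huP (h ▸ Submodule.zero_mem _)
    obtain ⟨t, htZ, ht⟩ : ∃ t ∈ Z, t ∉ (Y ⊓ Z) ⊔ Submodule.span F {u} := by
      by_contra hcon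
      push Not at hcon
      have h1 : Z ≤ (Y ⊓ Z) ⊔ Submodule.span F {u} := hcon
      have h2 := Submodule.finrank_mono h1
      have h3 := Submodule.finrank_add_le_finrank_add_finrank (Y ⊓ Z) (Submodule.span F {u})
      rw [finrank_span_singleton hu0] at h3
      omega
    have hcomb : ∀ a b : F, a • u + b • t ∈ Y ⊓ Z → a = 0 ∧ b = 0 := by
      intro a b hab
      have hb : b = 0 := by
        by_contra hb
        apply ht
        have h1 : b • t ∈ (Y ⊓ Z) ⊔ Submodule.span F {u} := by
          have h2 : b • t = (a • u + b • t) + (-a) • u := by module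
          rw [h2]
          exact Submodule.add_mem_sup hab
            (Submodule.smul_mem _ _ (Submodule.mem_span_singleton_self u))
        exact (Submodule.smul_mem_iff _ hb).1 h1
      refine ⟨?_, hb⟩
      by_contra ha
      subst hb
      rw [zero_smul, add_zero] at hab
      exact huP ((Submodule.smul_mem_iff _ ha).1 hab)
    have hli : LinearIndependent F ![u, t] := by
      rw [LinearIndependent.pair_iff]
      intro a b hab
      exact hcomb a b (hab ▸ Submodule.zero_mem _)
    have hLr := aux_pair_finrank hli
    have hLZ : Submodule.span F ({u, t} : Set (Fin n → F)) ≤ Z := by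
      rw [Submodule.span_le]
      rintro x (rfl | rfl)
      · exact huZ
      · exact htZ
    have hLT := hsub (⟨⟨hLr, hLZ⟩, aux_nd hLr (Submodule.subset_span (by simp)) hu⟩ :
      Submodule.span F ({u, t} : Set (Fin n → F)) ∈ tcOf F n 2 Z)
    have hadj : Module.finrank F
        ↥(Submodule.span F ({u, t} : Set (Fin n → F)) ⊓ Y) = 2 - 1 :=
      hT.2 hLT hY (fun h => hYZ (h ▸ hLZ))
    have hbot : Submodule.span F ({u, t} : Set (Fin n → F)) ⊓ Y = ⊥ := by
      rw [eq_bot_iff]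
      rintro x ⟨hx1, hx2⟩
      have hxZ := hLZ hx1
      obtain ⟨a, b, rfl⟩ := Submodule.mem_span_pair.1 hx1
      obtain ⟨rfl, rfl⟩ := hcomb a b ⟨hx2, hxZ⟩
      simp
    rw [hbot] at hadj
    simp at hadj

theorem aux_sup_s12 {F : Type*} [Field F] {n : ℕ} {X : Submodule F (Fin n → F)}
    (hX : Module.finrank F X = 2) {i k : Fin n} (hXi : ∀ x ∈ X, x i = 0)
    {x v : Fin n → F} (hx : x ∈ X) (hxk : x k ≠ 0) (hv : ∀ m, v m ≠ 0)
    (hw : ∀ m, x m + x k * v m ≠ 0) :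
    Submodule.span F {v} ∈ ndCodes F n 1 ∧ X ⊔ Submodule.span F {v} ∈ ndCodes F n 3 ∧
      isMaxClique F n 2 (tcOf F n 2 (X ⊔ Submodule.span F {v})) := by
  have hv0 : v ≠ 0 := fun h => hv i (by simp [h])
  have hvs := Submodule.mem_span_singleton_self (R := F) v
  have hvZ : v ∈ X ⊔ Submodule.span F {v} := Submodule.mem_sup_right hvs
  have hZ : Module.finrank F ↥(X ⊔ Submodule.span F {v}) = 3 := by
    have h1 := Submodule.finrank_sup_add_finrank_inf_eq X (Submodule.span F {v})
    have h2 : X ⊓ Submodule.span F {v} = ⊥ := by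
      rw [eq_bot_iff]
      rintro y ⟨hy1, hy2⟩
      obtain ⟨a, rfl⟩ := Submodule.mem_span_singleton.1 hy2
      have := hXi _ hy1
      simp [hv i] at this
      simp [this]
    rw [h2, finrank_span_singleton hv0, hX, finrank_bot] at h1
    omega
  refine ⟨aux_nd (finrank_span_singleton hv0) hvs hv, aux_nd hZ hvZ hv, ?_⟩
  refine aux_max hZ (v := v) (w := x + x k • v) hvZ ?_ hv ?_ ?_
  · exact Submodule.add_mem _ (Submodule.mem_sup_left hx) (Submodule.smul_mem _ _ hvZ)
  · intro m
    simpa using hw m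
  · rw [LinearIndependent.pair_iff]
    intro a b hab
    have hi := congrFun hab i
    have hk := congrFun hab k
    simp [hXi x hx] at hi hk
    have h1 : a + b * x k = 0 := by
      have : (a + b * x k) * v i = 0 := by linear_combination hi
      exact (mul_eq_zero.1 this).resolve_right (hv i)
    have h2 : b * x k = 0 := by linear_combination hk - v k * h1
    have hb := (mul_eq_zero.1 h2).resolve_right hxk
    subst hb
    simpa using h1

/-- (`q ≥ 3`, `n ≥ 4`.) For every 2-dimensional subspace
`X ∉ C(n,2)_q` there are `X₁, X₂ ∈ C(n,1)_q` such that `X + X₁` and `X + X₂` are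
distinct elements of `C(n,3)_q` and both `T^c(X + X₁)`, `T^c(X + X₂)` are maximal
cliques (tops) of `Γ(n,2)_q`. -/
theorem stmt_12 (q n : ℕ) (F : Type*) [Field F] [Fintype F]
    (hF : Fintype.card F = q) (hq : 3 ≤ q) (hn : 4 ≤ n)
    (X : Submodule F (Fin n → F)) (hX : Module.finrank F ↥X = 2)
    (hXd : X ∉ ndCodes F n 2) :
    ∃ X₁ ∈ ndCodes F n 1, ∃ X₂ ∈ ndCodes F n 1,
      X ⊔ X₁ ≠ X ⊔ X₂ ∧
      X ⊔ X₁ ∈ ndCodes F n 3 ∧ X ⊔ X₂ ∈ ndCodes F n 3 ∧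
      isMaxClique F n 2 (tcOf F n 2 (X ⊔ X₁)) ∧
      isMaxClique F n 2 (tcOf F n 2 (X ⊔ X₂)) := by
  classical
  obtain ⟨i, hXi⟩ : ∃ i : Fin n, ∀ x ∈ X, x i = 0 := by
    by_contra hcon
    push Not at hcon
    refine hXd ⟨hX, fun i hi => ?_⟩
    obtain ⟨x, hx, hxi⟩ := hcon i
    exact hxi (aux_mem_coordHyp.1 (hi hx))
  obtain ⟨b, hb0, hb1⟩ : ∃ b : F, b ≠ 0 ∧ b ≠ 1 := by
    have hlt : ({0, 1} : Finset F).card < Fintype.card F :=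
      lt_of_le_of_lt Finset.card_le_two (by omega)
    obtain ⟨b, hb⟩ := Finset.exists_mem_notMem_of_card_lt_card
      (s := ({0, 1} : Finset F)) (t := Finset.univ) (by simpa using hlt)
    simp at hb
    exact ⟨b, hb.1, hb.2⟩
  -- the hyperplane-like subspace to avoid
  set ei : Fin n → F := Pi.single i 1 with hei
  obtain ⟨j, hj⟩ : ∃ j : Fin n, Pi.single j (1 : F) ∉ X ⊔ Submodule.span F {ei} := by
    by_contra hcon
    push Not at hcon
    have htop : (⊤ : Submodule F (Fin n → F)) ≤ X ⊔ Submodule.span F {ei} := by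
      intro y _
      rw [pi_eq_sum_univ' y]
      exact Submodule.sum_mem _ fun m _ => Submodule.smul_mem _ _ (hcon m)
    have h2 := Submodule.finrank_mono htop
    have h3 := Submodule.finrank_add_le_finrank_add_finrank X (Submodule.span F {ei})
    have h4 := finrank_span_le_card (R := F) ({ei} : Set (Fin n → F))
    simp at h2 h4
    omega
  obtain ⟨x, hx, hxj, k, hxk⟩ : ∃ x ∈ X, x j = 0 ∧ ∃ k, x k ≠ 0 := by
    have h1 : LinearMap.ker ((LinearMap.proj j : (Fin n → F) →ₗ[F] F).comp X.subtype) ≠ ⊥ :=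
      LinearMap.ker_ne_bot_of_finrank_lt (by rw [hX, Module.finrank_self]; norm_num)
    obtain ⟨⟨x, hx⟩, hxj, hx0⟩ := (Submodule.ne_bot_iff _).1 h1
    refine ⟨x, hx, by simpa using hxj, ?_⟩
    by_contra hcon
    push Not at hcon
    exact hx0 (Subtype.ext (funext hcon))
  -- changing one coordinate of an admissible vector
  have hchange : ∀ (m₀ : Fin n) (v : Fin n → F), x m₀ = 0 → (∀ m, v m ≠ 0) →
      (∀ m, x m + x k * v m ≠ 0) →
      (∀ m, (v + ((b - 1) * v m₀) • (Pi.single m₀ (1 : F) : Fin n → F)) m ≠ 0) ∧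
      (∀ m, x m + x k * (v + ((b - 1) * v m₀) • (Pi.single m₀ (1 : F) : Fin n → F)) m ≠ 0) := by
    intro m₀ v hxm hv hw
    have hcoord : (v + ((b - 1) * v m₀) • (Pi.single m₀ (1 : F) : Fin n → F)) m₀ = b * v m₀ := by
      simp
      ring
    constructor
    · intro m
      by_cases hm : m = m₀
      · rw [hm, hcoord]
        exact mul_ne_zero hb0 (hv m₀)
      · simpa [hm] using hv m
    · intro m
      by_cases hm : m = m₀
      · rw [hm, hcoord, hxm, zero_add]
        exact mul_ne_zero hxk (mul_ne_zero hb0 (hv m₀))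
      · simpa [hm] using hw m
  have hcne : ∀ a : F, a ≠ 0 → (b - 1) * a ≠ 0 := fun a ha =>
    mul_ne_zero (sub_ne_zero.2 hb1) ha
  obtain ⟨v, hv, hw⟩ : ∃ v : Fin n → F, (∀ m, v m ≠ 0) ∧ ∀ m, x m + x k * v m ≠ 0 := by
    have : ∀ m, ∃ a : F, a ≠ 0 ∧ x m + x k * a ≠ 0 := by
      intro m
      by_cases h1 : x m + x k * 1 = 0
      · refine ⟨b, hb0, fun h2 => ?_⟩
        have h3 : x k * (b - 1) = 0 := by linear_combination h2 - h1
        exact (mul_ne_zero hxk (sub_ne_zero.2 hb1)) h3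
      · exact ⟨1, one_ne_zero, h1⟩
    choose v hv using this
    exact ⟨v, fun m => (hv m).1, fun m => (hv m).2⟩
  obtain ⟨v, hv, hw, hvW⟩ : ∃ v : Fin n → F, (∀ m, v m ≠ 0) ∧
      (∀ m, x m + x k * v m ≠ 0) ∧ v ∉ X ⊔ Submodule.span F {ei} := by
    by_cases hvW : v ∈ X ⊔ Submodule.span F {ei}
    · obtain ⟨h1, h2⟩ := hchange j v hxj hv hw
      refine ⟨_, h1, h2, fun h3 => hj ?_⟩
      exact (Submodule.smul_mem_iff _ (hcne _ (hv j))).1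
        ((Submodule.add_mem_iff_right _ hvW).1 h3)
    · exact ⟨v, hv, hw, hvW⟩
  obtain ⟨hv', hw'⟩ := hchange i v (hXi x hx) hv hw
  obtain ⟨a1, a2, a3⟩ := aux_sup_s12 hX hXi hx hxk hv hw
  obtain ⟨b1, b2, b3⟩ := aux_sup_s12 hX hXi hx hxk hv' hw'
  refine ⟨_, a1, _, b1, ?_, a2, b2, a3, b3⟩
  intro heq
  have hmem : v + ((b - 1) * v i) • ei ∈ X ⊔ Submodule.span F {v} := by
    rw [heq]
    exact Submodule.mem_sup_right (Submodule.mem_span_singleton_self _)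
  have hvZ : v ∈ X ⊔ Submodule.span F {v} :=
    Submodule.mem_sup_right (Submodule.mem_span_singleton_self _)
  have hei' : ei ∈ X ⊔ Submodule.span F {v} :=
    (Submodule.smul_mem_iff _ (hcne _ (hv i))).1 ((Submodule.add_mem_iff_right _ hvZ).1 hmem)
  obtain ⟨y, hy, z, hz, hyz⟩ := Submodule.mem_sup.1 hei'
  obtain ⟨c, rfl⟩ := Submodule.mem_span_singleton.1 hz
  have hc : c ≠ 0 := by
    rintro rfl
    have := congrFun hyz i
    simp [hXi y hy, hei] at this
  apply hvW
  refine (Submodule.smul_mem_iff _ hc).1 ?_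
  have h5 : c • v = -y + ei := by rw [← hyz]; module
  rw [h5]
  exact Submodule.add_mem_sup (Submodule.neg_mem _ hy) (Submodule.mem_span_singleton_self _)
end

section
/- Let q ≥ 3 be a prime power, n ≥ 4, and V = F_q^n. Let f : C(n,2)_q → G_2(V) be an injective map sending adjacent pairs to adjacent pairs such that f(S(P)) is a star of Γ_2(V) for every P ∈ C(n,1)_q. Let g be a bijection of G_1(V) such that f(S^c(P)) ⊆ S(g(P)) for every 1-dimensional subspace P ⊂ V and g(G_1(X)) ⊆ G_1(f(X)) for every X ∈ C(n,2)_q. Then for every 2-dimensional subspace X ⊂ V there exists a 2-dimensional subspace X' ⊂ V with g(G_1(X)) = G_1(X'); that is, g sends lines of the projective space of V to lines. -/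
open Module in
lemma aux_rank1_span {F : Type*} [Field F] {n : ℕ} {v : Fin n → F} (hv : v ≠ 0) :
    finrank F ↥(Submodule.span F {v}) = 1 := finrank_span_singleton hv

open Module in
/-- The join of two distinct points is a line. -/
lemma aux_join {F : Type*} [Field F] {n : ℕ} {P Q : Submodule F (Fin n → F)}
    (hP : finrank F P = 1) (hQ : finrank F Q = 1) (h : P ≠ Q) :
    finrank F ↥(P ⊔ Q) = 2 := by
  have h1 := Submodule.finrank_sup_add_finrank_inf_eq P Q
  have h2 : finrank F ↥(P ⊓ Q) = 0 := by
    by_contra h0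
    have hle : finrank F ↥(P ⊓ Q) ≤ finrank F P := Submodule.finrank_mono inf_le_left
    have e1 : P ⊓ Q = P := Submodule.eq_of_le_of_finrank_eq inf_le_left (by omega)
    have e2 : P ⊓ Q = Q := Submodule.eq_of_le_of_finrank_eq inf_le_right (by omega)
    exact h (e1.symm.trans e2)
  omega

open Module in
lemma aux_line_eq {F : Type*} [Field F] {n : ℕ} {P Q Y : Submodule F (Fin n → F)}
    (hP : finrank F P = 1) (hQ : finrank F Q = 1) (h : P ≠ Q) (hY : finrank F Y = 2)
    (hPY : P ≤ Y) (hQY : Q ≤ Y) : P ⊔ Q = Y :=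
  Submodule.eq_of_le_of_finrank_eq (sup_le hPY hQY) (by rw [aux_join hP hQ h, hY])

open Module in
/-- Two lines in a plane meet. -/
lemma aux_meet {F : Type*} [Field F] {n : ℕ} {Y Y' Z : Submodule F (Fin n → F)}
    (hY : finrank F Y = 2) (hY' : finrank F Y' = 2) (hZ : finrank F Z ≤ 3)
    (h : Y ≤ Z) (h' : Y' ≤ Z) :
    ∃ P : Submodule F (Fin n → F), finrank F P = 1 ∧ P ≤ Y ∧ P ≤ Y' := by
  have h1 := Submodule.finrank_sup_add_finrank_inf_eq Y Y'
  have h2 : finrank F ↥(Y ⊔ Y') ≤ finrank F Z := Submodule.finrank_mono (sup_le h h')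
  have h3 : Y ⊓ Y' ≠ ⊥ := by
    intro h0
    rw [h0, finrank_bot] at h1
    omega
  obtain ⟨v, hv, hv0⟩ := Submodule.exists_mem_ne_zero_of_ne_bot h3
  refine ⟨Submodule.span F {v}, aux_rank1_span hv0, ?_, ?_⟩
  · rw [Submodule.span_singleton_le_iff_mem]; exact hv.1
  · rw [Submodule.span_singleton_le_iff_mem]; exact hv.2

open Module in
/-- All lines have the same number of points. -/
lemma aux_card {F : Type*} [Field F] {n : ℕ} {Y Y' : Submodule F (Fin n → F)}
    (hY : finrank F Y = 2) (hY' : finrank F Y' = 2) :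
    {P : Submodule F (Fin n → F) | finrank F P = 1 ∧ P ≤ Y}.ncard =
      {P : Submodule F (Fin n → F) | finrank F P = 1 ∧ P ≤ Y'}.ncard := by
  have key : ∀ Z : Submodule F (Fin n → F),
      {P : Submodule F (Fin n → F) | finrank F P = 1 ∧ P ≤ Z} =
        (fun Q : Submodule F Z => Q.map Z.subtype) '' {Q | finrank F Q = 1} := by
    intro Z
    ext P
    constructor
    · rintro ⟨h1, h2⟩
      refine ⟨P.comap Z.subtype, ?_, ?_⟩
      · have := (Submodule.comapSubtypeEquivOfLe h2).finrank_eq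
        simpa [h1] using this
      · simpa [Submodule.map_comap_subtype] using h2
    · rintro ⟨Q, h1, rfl⟩
      refine ⟨?_, Submodule.map_subtype_le Z Q⟩
      rw [← h1]
      exact Submodule.finrank_map_subtype_eq Z Q
  have hin : ∀ Z : Submodule F (Fin n → F),
      Function.Injective (fun Q : Submodule F Z => Q.map Z.subtype) := fun Z =>
    Submodule.map_injective_of_injective Z.injective_subtype
  rw [key, key, Set.ncard_image_of_injective _ (hin Y), Set.ncard_image_of_injective _ (hin Y')]
  let e : Y ≃ₗ[F] Y' := LinearEquiv.ofFinrankEq Y Y' (hY.trans hY'.symm)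
  have : {Q : Submodule F Y' | finrank F Q = 1} =
      (fun Q : Submodule F Y => Q.map (e : Y →ₗ[F] Y')) '' {Q | finrank F Q = 1} := by
    ext P
    constructor
    · intro h
      refine ⟨P.map (e.symm : Y' →ₗ[F] Y), ?_, ?_⟩
      · exact (LinearEquiv.finrank_map_eq e.symm P).trans h
      · ext z; simp
    · rintro ⟨Q, h1, rfl⟩
      exact (LinearEquiv.finrank_map_eq e Q).trans h1
  rw [this, Set.ncard_image_of_injective _ (Submodule.map_injective_of_injective e.injective)]

open Module in
/-- An injection mapping a line into a line maps it onto that line. -/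
lemma aux_onto {F : Type*} [Field F] [Fintype F] {n : ℕ}
    {g : Submodule F (Fin n → F) → Submodule F (Fin n → F)}
    (hg : Set.InjOn g (grass F n 1)) {Y Y' : Submodule F (Fin n → F)}
    (hY : finrank F Y = 2) (hY' : finrank F Y' = 2)
    (h : g '' {P : Submodule F (Fin n → F) | finrank F P = 1 ∧ P ≤ Y} ⊆
      {P : Submodule F (Fin n → F) | finrank F P = 1 ∧ P ≤ Y'}) :
    g '' {P : Submodule F (Fin n → F) | finrank F P = 1 ∧ P ≤ Y} =
      {P : Submodule F (Fin n → F) | finrank F P = 1 ∧ P ≤ Y'} := by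
  have hfin : Finite (Submodule F (Fin n → F)) :=
    Finite.of_injective (fun S => (S : Set (Fin n → F))) SetLike.coe_injective
  refine Set.eq_of_subset_of_ncard_le h ?_ (Set.toFinite _)
  rw [(hg.mono fun P hP => hP.1).ncard_image, aux_card hY hY']

open Module in
/-- Plane lemma: a plane spanned by a good point `O` (all lines through it are good) and a
good line `a` not through `O` is mapped to a plane. -/
lemma aux_plane {F : Type*} [Field F] {n : ℕ}
    {f g : Submodule F (Fin n → F) → Submodule F (Fin n → F)}
    (N : Set (Submodule F (Fin n → F)))
    (hN : ∀ Y ∈ N, finrank F Y = 2) (hfN : ∀ Y ∈ N, finrank F (f Y) = 2)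
    (hg1 : ∀ P : Submodule F (Fin n → F), finrank F P = 1 → finrank F (g P) = 1)
    (hginj : Set.InjOn g (grass F n 1))
    (hline : ∀ Y ∈ N, g '' {P : Submodule F (Fin n → F) | finrank F P = 1 ∧ P ≤ Y} =
      {P : Submodule F (Fin n → F) | finrank F P = 1 ∧ P ≤ f Y})
    (O a : Submodule F (Fin n → F)) (hO : finrank F O = 1) (ha : a ∈ N)
    (hON : ∀ Y : Submodule F (Fin n → F), finrank F Y = 2 → O ≤ Y → Y ∈ N) (hOa : ¬ O ≤ a) :
    ∃ Z : Submodule F (Fin n → F), finrank F Z ≤ 3 ∧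
      ∀ P : Submodule F (Fin n → F), finrank F P = 1 → (g P ≤ Z ↔ P ≤ a ⊔ O) := by
  have hinc : ∀ Y ∈ N, ∀ P : Submodule F (Fin n → F), finrank F P = 1 → P ≤ Y → g P ≤ f Y := by
    intro Y hY P hP hPY
    have : g P ∈ {P : Submodule F (Fin n → F) | finrank F P = 1 ∧ P ≤ f Y} := by
      rw [← hline Y hY]; exact ⟨P, ⟨hP, hPY⟩, rfl⟩
    exact this.2
  have hsur : ∀ Y ∈ N, ∀ Q : Submodule F (Fin n → F), finrank F Q = 1 → Q ≤ f Y →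
      ∃ P : Submodule F (Fin n → F), finrank F P = 1 ∧ P ≤ Y ∧ g P = Q := by
    intro Y hY Q hQ hQY
    have : Q ∈ g '' {P : Submodule F (Fin n → F) | finrank F P = 1 ∧ P ≤ Y} := by
      rw [hline Y hY]; exact ⟨hQ, hQY⟩
    obtain ⟨P, ⟨h1, h2⟩, h3⟩ := this
    exact ⟨P, h1, h2, h3⟩
  have hne : ∀ P Q : Submodule F (Fin n → F), finrank F P = 1 → finrank F Q = 1 → P ≠ Q → g P ≠ g Q :=
    fun P Q hP hQ h h' => h (hginj hP hQ h')
  have hdim : ∀ A B : Submodule F (Fin n → F), finrank F A = 2 → finrank F B = 1 →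
      finrank F ↥(A ⊔ B) ≤ 3 := by
    intro A B hA hB
    have := Submodule.finrank_add_le_finrank_add_finrank A B
    omega
  refine ⟨f a ⊔ g O, hdim _ _ (hfN a ha) (hg1 O hO), ?_⟩
  intro P hP
  by_cases hPO : P = O
  · subst hPO
    exact ⟨fun _ => le_sup_right, fun _ => le_sup_right⟩
  have hL := aux_join hP hO hPO
  have hLN : P ⊔ O ∈ N := hON _ hL le_sup_right
  constructor
  · intro h
    have e : g P ⊔ g O = f (P ⊔ O) := aux_line_eq (hg1 P hP) (hg1 O hO) (hne _ _ hP hO hPO)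
      (hfN _ hLN) (hinc _ hLN P hP le_sup_left) (hinc _ hLN O hO le_sup_right)
    obtain ⟨Q, hQ, hQ1, hQ2⟩ := aux_meet (hfN _ hLN) (hfN a ha)
      (hdim _ _ (hfN a ha) (hg1 O hO)) (e ▸ sup_le h le_sup_right) le_sup_left
    obtain ⟨T, hT, hTL, hgT⟩ := hsur _ hLN Q hQ hQ1
    obtain ⟨T', hT', hTa, hgT'⟩ := hsur _ ha Q hQ hQ2
    have hTT : T = T' := hginj hT hT' (hgT.trans hgT'.symm)
    subst hTT
    have hTO : T ≠ O := fun h => hOa (h ▸ hTa)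
    have e2 := aux_line_eq hT hO hTO hL hTL le_sup_right
    calc P ≤ P ⊔ O := le_sup_left
      _ = T ⊔ O := e2.symm
      _ ≤ a ⊔ O := sup_le_sup_right hTa O
  · intro h
    obtain ⟨T, hT, hTL, hTa⟩ := aux_meet hL (hN a ha) (hdim _ _ (hN a ha) hO)
      (sup_le h le_sup_right) le_sup_left
    have hTO : T ≠ O := fun h => hOa (h ▸ hTa)
    have e : g T ⊔ g O = f (P ⊔ O) := aux_line_eq (hg1 T hT) (hg1 O hO) (hne _ _ hT hO hTO)
      (hfN _ hLN) (hinc _ hLN T hT hTL) (hinc _ hLN O hO le_sup_right)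
    calc g P ≤ f (P ⊔ O) := hinc _ hLN P hP le_sup_left
      _ = g T ⊔ g O := e.symm
      _ ≤ f a ⊔ g O := sup_le_sup_right (hinc a ha T hT hTa) _

open Module in
/-- Choice of the line `a` in the plane spanned by `X` and `o`. -/
lemma aux_geom {F : Type*} [Field F] {n : ℕ} {X : Submodule F (Fin n → F)}
    (hX : finrank F X = 2) {i : Fin n} (hXi : X ≤ coordHyp F n i)
    {x o : Fin n → F} (hx : x ∈ X) (hx0 : x ≠ 0) (ho : ∀ m, o m ≠ 0)
    (hox : ∀ m, o m + x m ≠ 0) :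
    ∃ a ∈ ndCodes F n 2, ¬ Submodule.span F {o} ≤ a ∧
      a ⊔ Submodule.span F {o} = X ⊔ Submodule.span F {o} := by
  have hco : ∀ z ∈ X, z i = 0 := fun z hz => by
    have := hXi hz
    simpa [coordHyp] using this
  obtain ⟨y, hy, hyx⟩ : ∃ y ∈ X, y ∉ Submodule.span F {x} := by
    by_contra! h
    have h1 : finrank F X ≤ finrank F ↥(Submodule.span F {x}) :=
      Submodule.finrank_mono (fun y hy => h y hy)
    rw [aux_rank1_span hx0] at h1
    omega
  have hy0 : y ≠ 0 := fun h => hyx (h ▸ Submodule.zero_mem _)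
  have hox0 : o + x ≠ 0 := fun h => hox i (by simpa using congrFun h i)
  have hne : Submodule.span F {o + x} ≠ Submodule.span F {y} := by
    intro h
    have : o + x ∈ Submodule.span F {y} := h ▸ Submodule.mem_span_singleton_self _
    obtain ⟨c, hc⟩ := Submodule.mem_span_singleton.1 this
    have := congrFun hc i
    simp [hco y hy, hco x hx] at this
    exact ho i this.symm
  have hXeq : Submodule.span F {x} ⊔ Submodule.span F {y} = X := by
    refine aux_line_eq (aux_rank1_span hx0) (aux_rank1_span hy0) ?_ hX ?_ ?_
    · intro h; exact hyx (h ▸ Submodule.mem_span_singleton_self _)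
    · rwa [Submodule.span_singleton_le_iff_mem]
    · rwa [Submodule.span_singleton_le_iff_mem]
  refine ⟨Submodule.span F {o + x} ⊔ Submodule.span F {y},
    ⟨aux_join (aux_rank1_span hox0) (aux_rank1_span hy0) hne, ?_⟩, ?_, ?_⟩
  · intro m hm
    have h1 : o + x ∈ coordHyp F n m :=
      hm (Submodule.mem_sup_left (Submodule.mem_span_singleton_self _))
    exact hox m (by simpa [coordHyp] using h1)
  · rw [Submodule.span_singleton_le_iff_mem]
    intro h
    obtain ⟨u, hu, w, hw, huw⟩ := Submodule.mem_sup.1 h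
    obtain ⟨c, rfl⟩ := Submodule.mem_span_singleton.1 hu
    obtain ⟨d, rfl⟩ := Submodule.mem_span_singleton.1 hw
    have h1 := congrFun huw i
    simp [hco y hy, hco x hx] at h1
    have hc : c = 1 := by
      exact mul_right_cancel₀ (ho i) (by rw [h1, one_mul])
    subst hc
    have hxy : x = (-d) • y := by
      have : x + d • y = 0 := by
        have h2 : o + (x + d • y) = o + 0 := by simpa [add_assoc] using huw
        exact add_left_cancel h2
      rw [neg_smul]; exact eq_neg_of_add_eq_zero_left this
    have hd : -d ≠ 0 := fun h => hx0 (by rw [hxy, h, zero_smul])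
    apply hyx
    rw [hxy]
    exact Submodule.mem_span_singleton.2 ⟨(-d)⁻¹, by rw [smul_smul, inv_mul_cancel₀ hd, one_smul]⟩
  · apply le_antisymm
    · refine sup_le (sup_le ?_ ?_) le_sup_right
      · rw [Submodule.span_singleton_le_iff_mem]
        exact Submodule.add_mem _ (Submodule.mem_sup_right (Submodule.mem_span_singleton_self _))
          (Submodule.mem_sup_left hx)
      · rw [Submodule.span_singleton_le_iff_mem]
        exact Submodule.mem_sup_left hy
    · refine sup_le ?_ le_sup_right
      rw [← hXeq]
      refine sup_le ?_ (le_sup_right.trans le_sup_left)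
      rw [Submodule.span_singleton_le_iff_mem]
      have h1 : o + x ∈ Submodule.span F {o + x} ⊔ Submodule.span F {y} ⊔ Submodule.span F {o} :=
        Submodule.mem_sup_left (Submodule.mem_sup_left (Submodule.mem_span_singleton_self _))
      have h2 : o ∈ Submodule.span F {o + x} ⊔ Submodule.span F {y} ⊔ Submodule.span F {o} :=
        Submodule.mem_sup_right (Submodule.mem_span_singleton_self _)
      simpa using Submodule.sub_mem _ h1 h2

open Module in
/-- Choice of two good points spanning different planes with `X`. -/
lemma aux_choice {F : Type*} [Field F] [Fintype F] {n : ℕ} (hq : 3 ≤ Fintype.card F)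
    (hn : 4 ≤ n) {X : Submodule F (Fin n → F)}
    (hX : finrank F X = 2) {i : Fin n} (hXi : X ≤ coordHyp F n i) :
    ∃ x o o' : Fin n → F, x ∈ X ∧ x ≠ 0 ∧ (∀ m, o m ≠ 0) ∧ (∀ m, o m + x m ≠ 0) ∧
      (∀ m, o' m ≠ 0) ∧ (∀ m, o' m + x m ≠ 0) ∧ o' ∉ X ⊔ Submodule.span F {o} := by
  classical
  have hco : ∀ z ∈ X, z i = 0 := fun z hz => by
    have := hXi hz
    simpa [coordHyp] using this
  have hav : ∀ u v : F, ∃ w, w ≠ u ∧ w ≠ v := by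
    intro u v
    have : ({u, v} : Finset F).card < Fintype.card F :=
      lt_of_le_of_lt Finset.card_le_two (by omega)
    obtain ⟨w, hw⟩ : ∃ w, w ∉ ({u, v} : Finset F) := by
      by_contra! h
      rw [Finset.eq_univ_of_forall h, Finset.card_univ] at this
      exact lt_irrefl _ this
    simp at hw
    exact ⟨w, hw.1, hw.2⟩
  obtain ⟨k, hki, hkX⟩ : ∃ k, k ≠ i ∧ (Pi.single k (1 : F) : Fin n → F) ∉ X := by
    by_contra! h
    have hli : LinearIndependent F
        (fun k : {k : Fin n // k ≠ i} => (⟨Pi.single k.1 (1 : F), h k.1 k.2⟩ : X)) := by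
      apply LinearIndependent.of_comp X.subtype
      exact (Pi.linearIndependent_single_one (Fin n) F).comp _ Subtype.val_injective
    have := hli.fintype_card_le_finrank
    rw [hX] at this
    simp [Fintype.card_subtype_compl] at this
    omega
  obtain ⟨x, hx, hxk, hx0⟩ : ∃ x ∈ X, x k = 0 ∧ x ≠ 0 := by
    let φ : X →ₗ[F] F := (LinearMap.proj k).comp X.subtype
    have h1 : LinearMap.ker φ ≠ ⊥ := by
      apply LinearMap.ker_ne_bot_of_finrank_lt
      rw [hX, finrank_self]; norm_num
    obtain ⟨v, hv, hv0⟩ := Submodule.exists_mem_ne_zero_of_ne_bot h1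
    exact ⟨v, v.2, hv, fun h => hv0 (Subtype.ext h)⟩
  choose o ho1 ho2 using fun m => hav 0 (-x m)
  obtain ⟨w, hw0, hwo⟩ := hav 0 (o k)
  refine ⟨x, o, Function.update o k w, hx, hx0, ho1, ?_, ?_, ?_, ?_⟩
  · intro m h; exact ho2 m (eq_neg_of_add_eq_zero_left h)
  · intro m
    by_cases hm : m = k
    · subst hm; simpa using hw0
    · simpa [hm] using ho1 m
  · intro m
    by_cases hm : m = k
    · subst hm; simpa [hxk] using hw0
    · simp only [Function.update_of_ne hm]
      intro h; exact ho2 m (eq_neg_of_add_eq_zero_left h)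
  · intro h
    obtain ⟨z, hz, u, hu, hzu⟩ := Submodule.mem_sup.1 h
    obtain ⟨c, rfl⟩ := Submodule.mem_span_singleton.1 hu
    have h1 := congrFun hzu i
    simp [hco z hz, Function.update_of_ne hki.symm] at h1
    have hc : c = 1 := by
      exact mul_right_cancel₀ (ho1 i) (by rw [h1, one_mul])
    subst hc
    apply hkX
    have hd : w - o k ≠ 0 := sub_ne_zero.2 hwo
    have : (Pi.single k (1 : F) : Fin n → F) = (w - o k)⁻¹ • z := by
      ext m
      have h2 := congrFun hzu m
      by_cases hm : m = k
      · subst hm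
        simp at h2
        have : z m = w - o m := by rw [← h2]; ring
        simp [this, hd]
      · simp [hm] at h2
        simp [hm, h2]
    rw [this]
    exact X.smul_mem _ hz

/-- (`q ≥ 3`, `n ≥ 4`.) In the setting of Statement 11, if moreover
`g` is a bijection of `G_1(V)` with `g(G_1(X)) ⊆ G_1(f(X))` for every `X ∈ C(n,2)_q`,
then `g` sends every line `G_1(X)` of the projective space of `V` to a line. -/
theorem stmt_13 (q n : ℕ) (F : Type*) [Field F] [Fintype F]
    (hF : Fintype.card F = q) (hq : 3 ≤ q) (hn : 4 ≤ n)
    (f : Submodule F (Fin n → F) → Submodule F (Fin n → F))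
    (hmem : ∀ X ∈ ndCodes F n 2, f X ∈ grass F n 2)
    (hinj : Set.InjOn f (ndCodes F n 2))
    (hadj : ∀ X ∈ ndCodes F n 2, ∀ Y ∈ ndCodes F n 2,
      adjSub F n 2 X Y → adjSub F n 2 (f X) (f Y))
    (hstar : ∀ P ∈ ndCodes F n 1, ∃ P' : Submodule F (Fin n → F),
      Module.finrank F ↥P' = 1 ∧ f '' starOf F n 2 P = starOf F n 2 P')
    (g : Submodule F (Fin n → F) → Submodule F (Fin n → F))
    (hgbij : Set.BijOn g (grass F n 1) (grass F n 1))
    (hg : ∀ P ∈ grass F n 1, f '' scOf F n 2 P ⊆ starOf F n 2 (g P))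
    (hg2 : ∀ X ∈ ndCodes F n 2,
      g '' {P : Submodule F (Fin n → F) | Module.finrank F ↥P = 1 ∧ P ≤ X} ⊆
        {P : Submodule F (Fin n → F) | Module.finrank F ↥P = 1 ∧ P ≤ f X}) :
    ∀ X : Submodule F (Fin n → F), Module.finrank F ↥X = 2 →
      ∃ X' : Submodule F (Fin n → F), Module.finrank F ↥X' = 2 ∧
        g '' {P : Submodule F (Fin n → F) | Module.finrank F ↥P = 1 ∧ P ≤ X} =
          {P : Submodule F (Fin n → F) | Module.finrank F ↥P = 1 ∧ P ≤ X'} := by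
  classical
  have hginj : Set.InjOn g (grass F n 1) := hgbij.injOn
  have hg1 : ∀ P : Submodule F (Fin n → F), Module.finrank F P = 1 → Module.finrank F (g P) = 1 :=
    fun P hP => hgbij.mapsTo hP
  have hline : ∀ Y ∈ ndCodes F n 2, _ := fun Y hY =>
    aux_onto hginj hY.1 (hmem Y hY) (hg2 Y hY)
  intro X hX
  by_cases hnd : X ∈ ndCodes F n 2
  · exact ⟨f X, hmem X hnd, hline X hnd⟩
  obtain ⟨i, hXi⟩ : ∃ i, X ≤ coordHyp F n i := by
    by_contra! h
    exact hnd ⟨hX, h⟩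
  obtain ⟨x, o, o', hx, hx0, ho, hox, ho', hox', hoo⟩ := aux_choice (hF ▸ hq) hn hX hXi
  have hpl : ∀ o : Fin n → F, (∀ m, o m ≠ 0) → (∀ m, o m + x m ≠ 0) →
      ∃ Z : Submodule F (Fin n → F), Module.finrank F Z ≤ 3 ∧
        ∀ P : Submodule F (Fin n → F), Module.finrank F P = 1 → (g P ≤ Z ↔ P ≤ X ⊔ Submodule.span F {o}) := by
    intro o ho hox
    obtain ⟨a, ha, hoa, hE⟩ := aux_geom hX hXi hx hx0 ho hox
    rw [← hE]
    have ho0 : o ≠ 0 := fun h => ho i (by simp [h])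
    refine aux_plane (ndCodes F n 2) (fun Y hY => hY.1) hmem hg1 hginj hline _ a
      (aux_rank1_span ho0) ha ?_ hoa
    intro Y hY hoY
    refine ⟨hY, fun m hm => ho m ?_⟩
    have : o ∈ coordHyp F n m := hm (hoY (Submodule.mem_span_singleton_self _))
    simpa [coordHyp] using this
  obtain ⟨Z, hZ, hZP⟩ := hpl o ho hox
  obtain ⟨Z', hZ', hZP'⟩ := hpl o' ho' hox'
  have ho0' : o' ≠ 0 := fun h => ho' i (by simp [h])
  have hO' := aux_rank1_span ho0'
  have hZZ : ¬ Z' ≤ Z := by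
    intro h
    have h1 := (hZP _ hO').1 (((hZP' _ hO').2 le_sup_right).trans h)
    exact hoo (h1 (Submodule.mem_span_singleton_self _))
  have hsub : ∀ P : Submodule F (Fin n → F), Module.finrank F P = 1 → P ≤ X → g P ≤ Z ⊓ Z' :=
    fun P hP hPX => le_inf ((hZP P hP).2 (hPX.trans le_sup_left))
      ((hZP' P hP).2 (hPX.trans le_sup_left))
  have hr : Module.finrank F ↥(Z ⊓ Z') = 2 := by
    apply le_antisymm
    · by_contra! h
      have h1 : Module.finrank F ↥(Z ⊓ Z') ≤ Module.finrank F Z' :=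
        Submodule.finrank_mono inf_le_right
      have e : Z ⊓ Z' = Z' := Submodule.eq_of_le_of_finrank_eq inf_le_right (by omega)
      exact hZZ (e ▸ inf_le_left)
    · obtain ⟨y, hy, hyx⟩ : ∃ y ∈ X, y ∉ Submodule.span F {x} := by
        by_contra! h
        have h1 : Module.finrank F X ≤ Module.finrank F ↥(Submodule.span F {x}) :=
          Submodule.finrank_mono (fun y hy => h y hy)
        rw [aux_rank1_span hx0] at h1
        omega
      have hy0 : y ≠ 0 := fun h => hyx (h ▸ Submodule.zero_mem _)
      have hx1 := aux_rank1_span hx0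
      have hy1 := aux_rank1_span hy0
      have hne : g (Submodule.span F {x}) ≠ g (Submodule.span F {y}) := by
        intro h
        have h2 := hginj hx1 hy1 h
        exact hyx (h2 ▸ Submodule.mem_span_singleton_self _)
      rw [← aux_join (hg1 _ hx1) (hg1 _ hy1) hne]
      apply Submodule.finrank_mono
      refine sup_le (hsub _ hx1 ?_) (hsub _ hy1 ?_)
      · rwa [Submodule.span_singleton_le_iff_mem]
      · rwa [Submodule.span_singleton_le_iff_mem]
  refine ⟨Z ⊓ Z', hr, aux_onto hginj hX hr ?_⟩
  rintro _ ⟨P, ⟨hP, hPX⟩, rfl⟩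
  exact ⟨hg1 P hP, hsub P hP hPX⟩
end

section
/- Let q ≥ 3 be a prime power and 1 < k < n−1. For every (k−1)-dimensional subspace X ⊂ V there exist Z_1, Z_2 ∈ C(n,k)_q such that X = Z_1 ∩ Z_2 and each of Z_1, Z_2 contains an element of C(n,1)_q (a 1-dimensional subspace not contained in any coordinate hyperplane). -/
lemma exists_nowhere_zero_notMem {F : Type*} [Field F] [Fintype F] {n : ℕ}
    (hq : 3 ≤ Fintype.card F) (W : Submodule F (Fin n → F)) (hW : W ≠ ⊤) :
    ∃ v : Fin n → F, (∀ i, v i ≠ 0) ∧ v ∉ W := by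
  classical
  by_contra! h
  apply hW
  obtain ⟨c, hc⟩ : ∃ c : F, c ∉ ({0, 1} : Finset F) := by
    by_contra! hc
    have h1 : Finset.univ ⊆ ({0, 1} : Finset F) := fun x _ => hc x
    have h2 := Finset.card_le_card h1
    have h3 := Finset.card_le_two (a := (0 : F)) (b := 1)
    rw [Finset.card_univ] at h2
    omega
  simp only [Finset.mem_insert, Finset.mem_singleton, not_or] at hc
  have hc1 : c - 1 ≠ 0 := sub_ne_zero.mpr hc.2
  rw [eq_top_iff]
  intro a _
  rw [← Finset.univ_sum_single a]
  refine Submodule.sum_mem _ fun i _ => ?_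
  have h1 : (1 : Fin n → F) ∈ W := h _ (fun _ => one_ne_zero)
  have h2 : Function.update (1 : Fin n → F) i c ∈ W := by
    apply h
    intro j
    by_cases hj : j = i
    · subst hj; simpa using hc.1
    · simp [hj]
  have h3 : Pi.single i (a i) = (a i / (c - 1)) • (Function.update (1 : Fin n → F) i c - 1) := by
    ext j
    by_cases hj : j = i
    · subst hj; simp [hc1]
    · simp [hj]
  rw [h3]
  exact W.smul_mem _ (W.sub_mem h2 h1)

lemma span_nowhere_zero_mem {F : Type*} [Field F] {n : ℕ} (hn : 0 < n)
    (v : Fin n → F) (hv : ∀ i, v i ≠ 0) : Submodule.span F {v} ∈ ndCodes F n 1 := by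
  refine ⟨finrank_span_singleton fun h => hv ⟨0, hn⟩ (by simp [h]), fun i hi => hv i ?_⟩
  have := hi (Submodule.mem_span_singleton_self v)
  simpa [coordHyp] using this

/-- (`q ≥ 3`, `1 < k < n-1`.) For every `(k-1)`-dimensional subspace
`X ⊂ V` there exist `Z₁, Z₂ ∈ C(n,k)_q` such that `X = Z₁ ∩ Z₂` and each `Zᵢ` contains
an element of `C(n,1)_q`. -/
theorem stmt_14 (q n k : ℕ) (F : Type*) [Field F] [Fintype F]
    (hF : Fintype.card F = q) (hq : 3 ≤ q) (hk : 1 < k) (hkn : k < n - 1)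
    (X : Submodule F (Fin n → F)) (hX : Module.finrank F ↥X = k - 1) :
    ∃ Z₁ ∈ ndCodes F n k, ∃ Z₂ ∈ ndCodes F n k,
      X = Z₁ ⊓ Z₂ ∧
      (∃ P ∈ ndCodes F n 1, P ≤ Z₁) ∧
      (∃ P ∈ ndCodes F n 1, P ≤ Z₂) := by
  have hd : Module.finrank F (Fin n → F) = n := by simp
  have hX' : X ≠ ⊤ := by
    rintro rfl
    rw [finrank_top, hd] at hX
    omega
  obtain ⟨v, hv, hvX⟩ := exists_nowhere_zero_notMem (hF ▸ hq) X hX'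
  have hZ1 := Submodule.finrank_sup_span_singleton hvX
  have hT : X ⊔ Submodule.span F {v} ≠ ⊤ := by
    intro h
    rw [h, finrank_top, hd] at hZ1
    omega
  obtain ⟨w, hw, hwZ⟩ := exists_nowhere_zero_notMem (hF ▸ hq) _ hT
  have hwX : w ∉ X := fun h => hwZ (Submodule.mem_sup_left h)
  have hZ2 := Submodule.finrank_sup_span_singleton hwX
  have hPv := span_nowhere_zero_mem (by omega : 0 < n) v hv
  have hPw := span_nowhere_zero_mem (by omega : 0 < n) w hw
  refine ⟨X ⊔ Submodule.span F {v}, ⟨by omega, fun i hi => hPv.2 i (le_sup_right.trans hi)⟩,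
    X ⊔ Submodule.span F {w}, ⟨by omega, fun i hi => hPw.2 i (le_sup_right.trans hi)⟩, ?_,
    ⟨_, hPv, le_sup_right⟩, ⟨_, hPw, le_sup_right⟩⟩
  apply le_antisymm (le_inf le_sup_left le_sup_left)
  rintro x ⟨h1, h2⟩
  obtain ⟨y, hy, z, hz, rfl⟩ := Submodule.mem_sup.mp h2
  obtain ⟨b, rfl⟩ := Submodule.mem_span_singleton.mp hz
  by_cases hb : b = 0
  · simpa [hb] using hy
  · exfalso
    apply hwZ
    have h3 := Submodule.sub_mem _ h1 (Submodule.mem_sup_left hy)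
    rw [add_sub_cancel_left] at h3
    exact (Submodule.smul_mem_iff _ hb).mp h3
end
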